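/- arXiv:0708.2853 — 5 statements merged into one kernel-verified Lean document; each statement's English description precedes it below -/
import Mathlib

section
/- There exists a unique representation basis A, that is, a set A of integers with r_{A,2}(n) = 1 for every nonzero integer n, such that limsup_{x→∞} A(x)/√x ≥ 1/√2. -/
/-!
The basis is an increasing union of finite Sidon sets (no integer has two representations as an
unordered sum of two elements), alternating two kinds of extension.

* To represent a missing integer `n`, adjoin `X` and `n - X` for a very large `X`
  (`exists_sidon_representing`).
* To gain density, adjoin a block of Erdős–Turán type. For a prime `p = 2 q + 1`, the numbers
  `2 p k + (k² mod p)` with `k` running over pairwise incongruent residues modulo `p` form a Sidon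
  set. The residues are represented by `k` with `p / 2 < |k| < p`, of both signs. A sum `k + l` is
  then either larger than `p` or smaller than `p / 2` in absolute value, so a sum of two block
  elements is never within a bounded distance of a third one, and the block lies in
  `[-2 p², 2 p²]`. Discarding the `k` for which `k² mod p` is within `M` of `0` or `p`, where `M`
  bounds the old set, makes the union with the old set Sidon (`sidon_union_block`). Only a number
  of `k` bounded in terms of `M` is lost (`card_indexSet`), so about `p = √(x / 2)` elements lie in
  `[-x, x]` for `x = 2 p²` (`exists_sidon_dense`).
-/

open Filter Set

/-- `repFn A h n` is the number of representations of `n` in the form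
`n = a 0 + ⋯ + a (h-1)` with `a 0 ≤ ⋯ ≤ a (h-1)` and all `a i ∈ A`;
values lie in `ℕ ∪ {∞}`. -/
noncomputable def repFn (A : Set ℤ) (h : ℕ) (n : ℤ) : ℕ∞ :=
  {a : Fin h → ℤ | Monotone a ∧ (∀ i, a i ∈ A) ∧ ∑ i, a i = n}.encard

/-- `countAbs A x` is the number of `a ∈ A` with `|a| ≤ x`. -/
noncomputable def countAbs (A : Set ℤ) (x : ℝ) : ℕ :=
  {a : ℤ | a ∈ A ∧ |(a : ℝ)| ≤ x}.ncard

/-! ### Representing a given integer -/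

/-- Every integer has at most one representation as an unordered sum of two elements of `A`. -/
def SidonSet (A : Set ℤ) : Prop :=
  ∀ x ∈ A, ∀ y ∈ A, ∀ z ∈ A, ∀ w ∈ A, x + y = z + w → (x = z ∧ y = w) ∨ (x = w ∧ y = z)

lemma abs_lt_of_mul_eq {P D e B : ℤ} (hP : 0 < P) (h : P * D = e) (he : |e| < P * B) :
    |D| < B := by
  rw [← h, abs_mul, abs_of_pos hP] at he
  exact lt_of_mul_lt_mul_left he hP.le

lemma exists_abs_bound (A : Finset ℤ) : ∃ M : ℕ, ∀ a ∈ A, |a| ≤ (M : ℤ) := by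
  refine ⟨∑ a ∈ A, a.natAbs, fun a ha => ?_⟩
  rw [Int.abs_eq_natAbs]
  exact_mod_cast Finset.single_le_sum (f := fun a : ℤ => a.natAbs) (fun _ _ => Nat.zero_le _) ha

/-- If `n` is not yet a sum of two elements of `A`, adjoin `X` and `n - X` with `X` large compared
with `n` and `A`. Comparing coefficients of `X`, the only possible coincidence would be
`X + (n - X) = a + b` with `a, b` in `A`, which the assumption on `n` excludes. -/
lemma exists_sidon_representing (A : Finset ℤ) (hA : SidonSet A) (n : ℤ) :
    ∃ B : Finset ℤ, A ⊆ B ∧ SidonSet B ∧ ∃ a ∈ B, ∃ b ∈ B, a + b = n := by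
  by_cases hn : ∃ a ∈ A, ∃ b ∈ A, a + b = n
  · exact ⟨A, Finset.Subset.refl _, hA, hn⟩
  push Not at hn
  obtain ⟨M, hM⟩ := exists_abs_bound A
  obtain ⟨X, hX⟩ : ∃ X : ℤ, X = 4 * M + 4 * |n| + 1 := ⟨_, rfl⟩
  refine ⟨insert X (insert (n - X) A), fun a ha => by simp [ha], ?_, X, by simp, n - X,
    by simp, by ring⟩
  have key : ∀ x : ℤ, x ∈ ((insert X (insert (n - X) A) : Finset ℤ) : Set ℤ) →
      x = X ∨ x = n - X ∨ (x ∈ A ∧ -(M : ℤ) ≤ x ∧ x ≤ M) := by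
    intro x hx
    simp only [Finset.coe_insert, Set.mem_insert_iff, Finset.mem_coe] at hx
    rcases hx with h | h | h
    · exact Or.inl h
    · exact Or.inr (Or.inl h)
    · exact Or.inr (Or.inr ⟨h, abs_le.1 (hM x h)⟩)
  have hn1 := le_abs_self n
  have hn2 := neg_abs_le n
  intro x hx y hy z hz w hw h
  rcases key x hx with hx | hx | ⟨hx, hx1, hx2⟩ <;>
  rcases key y hy with hy | hy | ⟨hy, hy1, hy2⟩ <;>
  rcases key z hz with hz | hz | ⟨hz, hz1, hz2⟩ <;>
  rcases key w hw with hw | hw | ⟨hw, hw1, hw2⟩ <;>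
  first
  | omega
  | exact hA x hx y hy z hz w hw h
  | exact absurd (by omega) (hn x hx y hy)
  | exact absurd (by omega) (hn z hz w hw)

/-! ### A dense block -/

/-- The integer with digits `k` and `k ^ 2 mod p` in base `2 p`. -/
def parabola (p k : ℤ) : ℤ := 2 * p * k + k ^ 2 % p

/-- The admissible indices for `p = 2 q + 1`: `q + 3 ≤ |k| ≤ 2 q - 1`, and `k ^ 2 mod p` keeps a
distance more than `M` from the ends of `[0, p]`. -/
noncomputable def indexSet (q M : ℤ) : Finset ℤ :=
  (Finset.Icc (q + 3) (2 * q - 1) ∪ Finset.Icc (-(2 * q - 1)) (-(q + 3))).filter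
    fun k => M < k ^ 2 % (2 * q + 1) ∧ k ^ 2 % (2 * q + 1) < 2 * q + 1 - M

lemma mem_indexSet {q M k : ℤ} : k ∈ indexSet q M ↔
    ((q + 3 ≤ k ∧ k ≤ 2 * q - 1) ∨ (-(2 * q - 1) ≤ k ∧ k ≤ -(q + 3))) ∧
      M < k ^ 2 % (2 * q + 1) ∧ k ^ 2 % (2 * q + 1) < 2 * q + 1 - M := by
  simp [indexSet]

/-- The admissible indices are pairwise incongruent modulo `2 q + 1`. -/
lemma eq_of_dvd_sub {q k l : ℤ} (hq : 0 ≤ q)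
    (hk : (q + 3 ≤ k ∧ k ≤ 2 * q - 1) ∨ (-(2 * q - 1) ≤ k ∧ k ≤ -(q + 3)))
    (hl : (q + 3 ≤ l ∧ l ≤ 2 * q - 1) ∨ (-(2 * q - 1) ≤ l ∧ l ≤ -(q + 3)))
    (h : 2 * q + 1 ∣ k - l) : k = l := by
  obtain ⟨c, hc⟩ := h
  have h1 : |c| < 2 := by
    refine abs_lt_of_mul_eq (P := 2 * q + 1) (by omega) hc.symm ?_
    rw [abs_lt]; constructor <;> omega
  rw [abs_lt] at h1
  obtain rfl | rfl | rfl : c = -1 ∨ c = 0 ∨ c = 1 := by omega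
  all_goals omega

lemma card_indexSet {q M : ℕ} (hp : Nat.Prime (2 * q + 1)) :
    2 * (q : ℤ) + 1 - (4 * M + 9) ≤ (indexSet q M).card := by
  have hp' : Prime (2 * (q : ℤ) + 1) := by
    have := Nat.prime_iff_prime_int.1 hp
    exact_mod_cast this
  by_cases hq3 : q < 3
  · omega
  set T : Finset ℤ :=
    Finset.Icc ((q : ℤ) + 3) (2 * q - 1) ∪ Finset.Icc (-(2 * (q : ℤ) - 1)) (-((q : ℤ) + 3)) with hT
  have memT : ∀ k, k ∈ T ↔
      (((q : ℤ) + 3 ≤ k ∧ k ≤ 2 * q - 1) ∨ (-(2 * (q : ℤ) - 1) ≤ k ∧ k ≤ -((q : ℤ) + 3))) := by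
    intro k; simp [hT]
  have hTcard : (T.card : ℤ) = 2 * (q - 3) := by
    rw [hT, Finset.card_union_of_disjoint]
    · simp only [Int.card_Icc]
      omega
    · rw [Finset.disjoint_left]
      intro k hk hk'
      simp only [Finset.mem_Icc] at hk hk'
      omega
  let P : ℤ → Prop := fun k =>
    (M : ℤ) < k ^ 2 % (2 * q + 1) ∧ k ^ 2 % (2 * q + 1) < 2 * (q : ℤ) + 1 - M
  have hsplit : (T.filter P).card + (T.filter fun k => ¬ P k).card = T.card :=
    Finset.card_filter_add_card_filter_not P
  set bad := T.filter fun k => ¬ P k with hbad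
  let E : Finset ℤ := Finset.Icc 0 (M : ℤ) ∪ Finset.Ico (2 * (q : ℤ) + 1 - M) (2 * q + 1)
  have hE : E.card ≤ 2 * M + 1 := by
    refine (Finset.card_union_le _ _).trans ?_
    simp only [Int.card_Icc, Int.card_Ico]
    omega
  have himg : bad.image (fun k => k ^ 2 % (2 * (q : ℤ) + 1)) ⊆ E := by
    intro r hr
    obtain ⟨k, hk, rfl⟩ := Finset.mem_image.1 hr
    have h0 := Int.emod_nonneg (k ^ 2) hp'.ne_zero
    have h1 := Int.emod_lt_of_pos (k ^ 2) (show (0 : ℤ) < 2 * q + 1 by omega)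
    have hk2 : ¬ P k := (Finset.mem_filter.1 hk).2
    simp only [P] at hk2
    simp only [E, Finset.mem_union, Finset.mem_Icc, Finset.mem_Ico]
    omega
  -- A residue has at most two square roots.
  have hfib : bad.card ≤ 2 * (bad.image (fun k => k ^ 2 % (2 * (q : ℤ) + 1))).card := by
    refine Finset.card_le_mul_card_image _ _ fun r hr => ?_
    obtain ⟨k, hk, rfl⟩ := Finset.mem_image.1 hr
    have hkT := (memT k).1 (Finset.mem_filter.1 hk).1
    refine (Finset.card_le_card (t := {k, -k}) ?_).trans Finset.card_le_two
    intro l hl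
    obtain ⟨hl1, hl2⟩ := Finset.mem_filter.1 hl
    have hlT := (memT l).1 (Finset.mem_filter.1 hl1).1
    have hdvd : 2 * (q : ℤ) + 1 ∣ (l - k) * (l - -k) := by
      have := Int.ModEq.dvd (show k ^ 2 ≡ l ^ 2 [ZMOD 2 * (q : ℤ) + 1] from hl2.symm)
      convert this using 1; ring
    rw [Finset.mem_insert, Finset.mem_singleton]
    rcases hp'.dvd_or_dvd hdvd with h | h
    · exact Or.inl (eq_of_dvd_sub (by omega) hlT hkT h)
    · exact Or.inr (eq_of_dvd_sub (by omega) hlT (by omega) h)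
  have := Finset.card_le_card himg
  have hfin : (indexSet q M).card = (T.filter P).card := rfl
  rw [hfin]
  omega

/-- The block is itself Sidon: the base `2 p` digits give `k₁ + k₂ = k₃ + k₄` and
`k₁² + k₂² ≡ k₃² + k₄²` modulo `p`, whence `p ∣ 2 (k₁ - k₃) (k₁ - k₄)`. -/
lemma parabola_add_eq {q M a b c d : ℤ} (hp : Prime (2 * q + 1)) (hq : 0 < q)
    (ha : a ∈ indexSet q M) (hb : b ∈ indexSet q M) (hc : c ∈ indexSet q M)
    (hd : d ∈ indexSet q M)
    (h : parabola (2 * q + 1) a + parabola (2 * q + 1) b =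
      parabola (2 * q + 1) c + parabola (2 * q + 1) d) :
    (a = c ∧ b = d) ∨ (a = d ∧ b = c) := by
  have pos : (0 : ℤ) < 2 * q + 1 := by omega
  have lo : ∀ k : ℤ, 0 ≤ k ^ 2 % (2 * q + 1) := fun k => Int.emod_nonneg _ pos.ne'
  have hi : ∀ k : ℤ, k ^ 2 % (2 * q + 1) < 2 * q + 1 := fun k => Int.emod_lt_of_pos _ pos
  have := lo a; have := lo b; have := lo c; have := lo d
  have := hi a; have := hi b; have := hi c; have := hi d
  unfold parabola at h
  have hD : |a + b - c - d| < 1 := by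
    refine abs_lt_of_mul_eq (P := 2 * (2 * q + 1)) (by omega) (e := c ^ 2 % (2 * q + 1) +
      d ^ 2 % (2 * q + 1) - a ^ 2 % (2 * q + 1) - b ^ 2 % (2 * q + 1)) (by linarith) ?_
    rw [abs_lt]; constructor <;> linarith
  rw [Int.abs_lt_one_iff] at hD
  obtain rfl : b = c + d - a := by omega
  have hr : a ^ 2 % (2 * q + 1) + (c + d - a) ^ 2 % (2 * q + 1) =
      c ^ 2 % (2 * q + 1) + d ^ 2 % (2 * q + 1) := by linarith
  have hmod : c ^ 2 + d ^ 2 ≡ a ^ 2 + (c + d - a) ^ 2 [ZMOD 2 * q + 1] := by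
    unfold Int.ModEq
    rw [Int.add_emod, ← hr, ← Int.add_emod]
  have hdvd : 2 * q + 1 ∣ 2 * ((a - c) * (a - d)) := by
    have := hmod.dvd
    convert this using 1; ring
  have h2 : ¬ (2 * q + 1 ∣ 2) := fun h => by
    have := Int.le_of_dvd (by norm_num) h; omega
  rcases hp.dvd_or_dvd hdvd with h' | h'
  · exact absurd h' h2
  rcases hp.dvd_or_dvd h' with h' | h'
  · have := eq_of_dvd_sub hq.le (mem_indexSet.1 ha).1 (mem_indexSet.1 hc).1 h'
    left; constructor <;> omega
  · have := eq_of_dvd_sub hq.le (mem_indexSet.1 ha).1 (mem_indexSet.1 hd).1 h'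
    right; constructor <;> omega

/-- No coincidence of type block + block = block + old: the leading digit `k + l` of the left side
has absolute value below `q - 3` or above `2 q + 5`, while that of the right side is about `m`. -/
lemma parabola_add_ne_add {q M k l m a : ℤ} (hMq : M ≤ q) (hM : 0 ≤ M)
    (hk : k ∈ indexSet q M) (hl : l ∈ indexSet q M) (hm : m ∈ indexSet q M)
    (ha : -M ≤ a ∧ a ≤ M) :
    parabola (2 * q + 1) k + parabola (2 * q + 1) l ≠ parabola (2 * q + 1) m + a := by
  intro h
  rw [mem_indexSet] at hk hl hm
  unfold parabola at h
  have hD : |k + l - m| < 2 := by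
    refine abs_lt_of_mul_eq (P := 2 * (2 * q + 1)) (by omega) (e := m ^ 2 % (2 * q + 1) + a
      - k ^ 2 % (2 * q + 1) - l ^ 2 % (2 * q + 1)) (by linarith) ?_
    rw [abs_lt]; constructor <;> linarith
  rw [abs_lt] at hD
  omega

/-- No coincidence of type block + block = old + old: modulo `2 p` the left side is more than
`2 M` away from `0`. -/
lemma parabola_add_ne {q M k l a b : ℤ} (hM : 0 ≤ M) (hMq : M ≤ q)
    (hk : k ∈ indexSet q M) (hl : l ∈ indexSet q M)
    (ha : -M ≤ a ∧ a ≤ M) (hb : -M ≤ b ∧ b ≤ M) :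
    parabola (2 * q + 1) k + parabola (2 * q + 1) l ≠ a + b := by
  intro h
  rw [mem_indexSet] at hk hl
  unfold parabola at h
  have he : (2 * (2 * q + 1)) * (k + l) =
      a + b - k ^ 2 % (2 * q + 1) - l ^ 2 % (2 * q + 1) := by linarith
  have hD : |k + l| < 1 := by
    refine abs_lt_of_mul_eq (P := 2 * (2 * q + 1)) (by omega) he ?_
    rw [abs_lt]; constructor <;> linarith
  rw [Int.abs_lt_one_iff] at hD
  rw [hD] at he
  omega

/-- In a coincidence block + old = block + old, the block elements agree. -/
lemma parabola_add_old_eq {q M k l a b : ℤ} (hM : 0 ≤ M) (hMq : M ≤ q)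
    (hk : k ∈ indexSet q M) (hl : l ∈ indexSet q M)
    (ha : -M ≤ a ∧ a ≤ M) (hb : -M ≤ b ∧ b ≤ M)
    (h : parabola (2 * q + 1) k + a = parabola (2 * q + 1) l + b) : k = l := by
  rw [mem_indexSet] at hk hl
  unfold parabola at h
  have hD : |k - l| < 1 := by
    refine abs_lt_of_mul_eq (P := 2 * (2 * q + 1)) (by omega) (e := l ^ 2 % (2 * q + 1) + b
      - k ^ 2 % (2 * q + 1) - a) (by linarith) ?_
    rw [abs_lt]; constructor <;> linarith
  rw [Int.abs_lt_one_iff] at hD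
  omega

lemma parabola_ne_small {q M k e : ℤ} (hM : 0 ≤ M) (hMq : M ≤ q)
    (hk : k ∈ indexSet q M) (he : -(3 * M) ≤ e ∧ e ≤ 3 * M) : parabola (2 * q + 1) k ≠ e := by
  intro h
  rw [mem_indexSet] at hk
  unfold parabola at h
  have hD : |k| < 2 := by
    refine abs_lt_of_mul_eq (P := 2 * (2 * q + 1)) (by omega) (e := e - k ^ 2 % (2 * q + 1))
      (by linarith) ?_
    rw [abs_lt]; constructor <;> linarith
  rw [abs_lt] at hD
  omega

lemma sidon_union_block (A : Finset ℤ) (hA : SidonSet A) {q M : ℤ} (hp : Prime (2 * q + 1))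
    (hq : 0 < q) (hM : 0 ≤ M) (hMq : M ≤ q) (hAM : ∀ a ∈ A, |a| ≤ M) :
    SidonSet ((A ∪ (indexSet q M).image (parabola (2 * q + 1)) : Finset ℤ) : Set ℤ) := by
  have key : ∀ x : ℤ,
      x ∈ ((A ∪ (indexSet q M).image (parabola (2 * q + 1)) : Finset ℤ) : Set ℤ) →
      (x ∈ A ∧ -M ≤ x ∧ x ≤ M) ∨ ∃ k ∈ indexSet q M, x = parabola (2 * q + 1) k := by
    intro x hx
    rw [Finset.mem_coe, Finset.mem_union, Finset.mem_image] at hx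
    rcases hx with h | ⟨k, hk, h⟩
    · exact Or.inl ⟨h, abs_le.1 (hAM x h)⟩
    · exact Or.inr ⟨k, hk, h.symm⟩
  intro x hx y hy z hz w hw h
  rcases key x hx with ⟨hx, hx'⟩ | ⟨k, hk, rfl⟩ <;>
  rcases key y hy with ⟨hy, hy'⟩ | ⟨l, hl, rfl⟩ <;>
  rcases key z hz with ⟨hz, hz'⟩ | ⟨m, hm, rfl⟩ <;>
  rcases key w hw with ⟨hw, hw'⟩ | ⟨n, hn, rfl⟩
  · exact hA x hx y hy z hz w hw h
  · exact absurd (by omega) (parabola_ne_small (e := x + y - z) hM hMq hn (by omega))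
  · exact absurd (by omega) (parabola_ne_small (e := x + y - w) hM hMq hm (by omega))
  · exact absurd h.symm (parabola_add_ne hM hMq hm hn hx' hy')
  · exact absurd (by omega) (parabola_ne_small (e := z + w - x) hM hMq hl (by omega))
  · obtain rfl := parabola_add_old_eq hM hMq hl hn hx' hz' (by omega)
    left; constructor <;> omega
  · obtain rfl := parabola_add_old_eq hM hMq hl hm hx' hw' (by omega)
    right; constructor <;> omega
  · exact absurd (by omega) (parabola_add_ne_add hMq hM hm hn hl hx')
  · exact absurd (by omega) (parabola_ne_small (e := z + w - y) hM hMq hk (by omega))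
  · obtain rfl := parabola_add_old_eq hM hMq hk hn hy' hz' (by omega)
    right; constructor <;> omega
  · obtain rfl := parabola_add_old_eq hM hMq hk hm hy' hw' (by omega)
    left; constructor <;> omega
  · exact absurd (by omega) (parabola_add_ne_add hMq hM hm hn hk hy')
  · exact absurd h (parabola_add_ne hM hMq hk hl hz' hw')
  · exact absurd (by omega) (parabola_add_ne_add hMq hM hk hl hn hz')
  · exact absurd h (parabola_add_ne_add hMq hM hk hl hm hw')
  · rcases parabola_add_eq hp hq hk hl hm hn h with ⟨rfl, rfl⟩ | ⟨rfl, rfl⟩ <;> simp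

lemma abs_parabola_le {q M k : ℤ} (hq : 0 < q) (hk : k ∈ indexSet q M) :
    |parabola (2 * q + 1) k| ≤ 2 * (2 * q + 1) ^ 2 := by
  have h0 := Int.emod_nonneg (k ^ 2) (show 2 * q + 1 ≠ 0 by omega)
  have h1 := Int.emod_lt_of_pos (k ^ 2) (show 0 < 2 * q + 1 by omega)
  rw [mem_indexSet] at hk
  have hk1 : k ≤ 2 * q - 1 := by omega
  have hk2 : -(2 * q - 1) ≤ k := by omega
  unfold parabola
  rw [abs_le]
  constructor <;> nlinarith

/-- A finite Sidon set `A` extends to a finite Sidon set that has almost `p` elements in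
`[-2 p², 2 p²]`, for some arbitrarily large `p`. -/
lemma exists_sidon_dense (A : Finset ℤ) (hA : SidonSet A) (N : ℕ) :
    ∃ B : Finset ℤ, A ⊆ B ∧ SidonSet B ∧ ∃ p : ℕ, N < p ∧
      (1 - 1 / ((N : ℝ) + 1)) * p ≤ ((B.filter fun b => |b| ≤ 2 * (p : ℤ) ^ 2).card : ℝ) := by
  obtain ⟨M, hM⟩ := exists_abs_bound A
  obtain ⟨p, hpN, hp⟩ := Nat.exists_infinite_primes ((N + 1) * (4 * M + 9))
  have hp9 : 4 * M + 9 ≤ p := le_trans (Nat.le_mul_of_pos_left _ (by omega)) hpN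
  obtain ⟨q, rfl⟩ : ∃ q, p = 2 * q + 1 := hp.odd_of_ne_two (by omega)
  have hp' : Prime (2 * (q : ℤ) + 1) := by
    have := Nat.prime_iff_prime_int.1 hp
    exact_mod_cast this
  have hq : (0 : ℤ) < q := by omega
  have hMq : (M : ℤ) ≤ q := by omega
  refine ⟨A ∪ (indexSet q M).image (parabola (2 * q + 1)), Finset.subset_union_left,
    sidon_union_block A hA hp' hq (by omega) hMq hM, 2 * q + 1, by nlinarith, ?_⟩
  have hinj : Set.InjOn (parabola (2 * (q : ℤ) + 1)) (indexSet q M) := by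
    intro k hk l hl h
    exact parabola_add_old_eq (M := M) (a := 0) (b := 0) (by omega) hMq hk hl (by omega)
      (by omega) (by omega)
  have hsub : (indexSet q M).image (parabola (2 * q + 1)) ⊆
      (A ∪ (indexSet q M).image (parabola (2 * q + 1))).filter
        fun b => |b| ≤ 2 * ((2 * q + 1 : ℕ) : ℤ) ^ 2 := by
    intro b hb
    refine Finset.mem_filter.2 ⟨Finset.mem_union_right _ hb, ?_⟩
    obtain ⟨k, hk, rfl⟩ := Finset.mem_image.1 hb
    push_cast
    exact abs_parabola_le hq hk
  have h1 := Finset.card_le_card hsub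
  rw [Finset.card_image_of_injOn hinj] at h1
  have h2 := card_indexSet hp (M := M)
  have h3 : (2 * (q : ℝ) + 1) - (4 * M + 9) ≤ (indexSet q M).card := by exact_mod_cast h2
  have h4 : ((indexSet q M).card : ℝ) ≤ (Finset.card ((A ∪ (indexSet q M).image
      (parabola (2 * q + 1))).filter fun b => |b| ≤ 2 * ((2 * q + 1 : ℕ) : ℤ) ^ 2) : ℝ) := by
    exact_mod_cast h1
  have h5 : ((N : ℝ) + 1) * (4 * M + 9) ≤ 2 * q + 1 := by exact_mod_cast hpN
  have h6 : (4 * (M : ℝ) + 9) ≤ 1 / ((N : ℝ) + 1) * (2 * q + 1) := by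
    rw [div_mul_eq_mul_div, one_mul, le_div_iff₀ (by positivity)]
    linarith
  refine le_trans ?_ (h3.trans h4)
  push_cast
  linarith

/-! ### The limit set -/

/-- The increasing sequence of finite Sidon sets; step `n` represents the `n`-th integer and
creates a scale `p > n` of high density. -/
lemma exists_sidon_sequence : ∃ F : ℕ → Finset ℤ, Monotone F ∧ (∀ n, SidonSet (F n)) ∧
    (∀ m : ℤ, ∃ n, ∃ a ∈ F n, ∃ b ∈ F n, a + b = m) ∧
    ∀ n : ℕ, ∃ p : ℕ, n < p ∧ (1 - 1 / ((n : ℝ) + 1)) * p ≤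
      (((F (n + 1)).filter fun b => |b| ≤ 2 * (p : ℤ) ^ 2).card : ℝ) := by
  have step : ∀ (n : ℕ) (A : {A : Finset ℤ // SidonSet A}), ∃ B : {B : Finset ℤ // SidonSet B},
      A.1 ⊆ B.1 ∧ (∃ a ∈ B.1, ∃ b ∈ B.1, a + b = Equiv.intEquivNat.symm n) ∧
      ∃ p : ℕ, n < p ∧ (1 - 1 / ((n : ℝ) + 1)) * p ≤
        ((B.1.filter fun b => |b| ≤ 2 * (p : ℤ) ^ 2).card : ℝ) := by
    rintro n ⟨A, hA⟩
    obtain ⟨B, hAB, hB, a, ha, b, hb, hab⟩ :=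
      exists_sidon_representing A hA (Equiv.intEquivNat.symm n)
    obtain ⟨C, hBC, hC, hp⟩ := exists_sidon_dense B hB n
    exact ⟨⟨C, hC⟩, hAB.trans hBC, ⟨a, hBC ha, b, hBC hb, hab⟩, hp⟩
  choose next h1 h2 h3 using step
  let F : ℕ → {A : Finset ℤ // SidonSet A} := fun n =>
    Nat.rec ⟨∅, by intro x hx; simp at hx⟩ (fun n A => next n A) n
  refine ⟨fun n => (F n).1, monotone_nat_of_le_succ fun n => h1 n (F n), fun n => (F n).2,
    fun m => ⟨Equiv.intEquivNat m + 1, ?_⟩, fun n => h3 n (F n)⟩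
  have := h2 (Equiv.intEquivNat m) (F (Equiv.intEquivNat m))
  rwa [Equiv.symm_apply_apply] at this

lemma repFn_two_eq_one {A : Set ℤ} (hA : SidonSet A) {n : ℤ}
    (h : ∃ a ∈ A, ∃ b ∈ A, a + b = n) : repFn A 2 n = 1 := by
  obtain ⟨a, b, ha, hb, hle, hab⟩ : ∃ a b, a ∈ A ∧ b ∈ A ∧ a ≤ b ∧ a + b = n := by
    obtain ⟨a, ha, b, hb, hab⟩ := h
    rcases le_total a b with hle | hle
    · exact ⟨a, b, ha, hb, hle, hab⟩
    · exact ⟨b, a, hb, ha, hle, by omega⟩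
  rw [repFn, Set.encard_eq_one]
  refine ⟨![a, b], Set.eq_singleton_iff_unique_mem.2 ⟨⟨?_, ?_, ?_⟩, ?_⟩⟩
  · intro i j hij
    fin_cases i <;> fin_cases j <;> simp_all
  · intro i
    fin_cases i <;> simp [ha, hb]
  · simpa using hab
  · rintro f ⟨hf, hfA, hsum⟩
    rw [Fin.sum_univ_two] at hsum
    have hf01 : f 0 ≤ f 1 := hf (by simp)
    have := hA (f 0) (hfA 0) (f 1) (hfA 1) a ha b hb (by omega)
    ext i
    fin_cases i <;> simp <;> omega

/-- There exists a unique representation basis `A` (i.e. `r_{A,2}(n) = 1` for all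
`n ≠ 0`) with `limsup_{x→∞} A(x)/√x ≥ 1/√2` (the limsup is taken in `[0,∞]`). -/
theorem stmt_4 :
    ∃ A : Set ℤ, (∀ n : ℤ, n ≠ 0 → repFn A 2 n = 1) ∧
      ENNReal.ofReal (1 / Real.sqrt 2) ≤
        Filter.limsup (fun x : ℝ => ENNReal.ofReal ((countAbs A x : ℝ) / Real.sqrt x))
          Filter.atTop := by
  obtain ⟨F, hmono, hsidon, hrep, hdense⟩ := exists_sidon_sequence
  let A : Set ℤ := {a | ∃ n, a ∈ F n}
  have hA : SidonSet A := by
    rintro x ⟨i, hx⟩ y ⟨j, hy⟩ z ⟨k, hz⟩ w ⟨l, hw⟩ h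
    have hi := @hmono i (i + j + k + l) (by omega)
    have hj := @hmono j (i + j + k + l) (by omega)
    have hk := @hmono k (i + j + k + l) (by omega)
    have hl := @hmono l (i + j + k + l) (by omega)
    exact hsidon (i + j + k + l) x (hi hx) y (hj hy) z (hk hz) w (hl hw) h
  refine ⟨A, fun n _ => ?_, ?_⟩
  · obtain ⟨i, a, ha, b, hb, hab⟩ := hrep n
    exact repFn_two_eq_one hA ⟨a, ⟨i, ha⟩, b, ⟨i, hb⟩, hab⟩
  have hlow : ∀ n : ℕ, ENNReal.ofReal ((1 - 1 / ((n : ℝ) + 1)) * (1 / Real.sqrt 2)) ≤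
      Filter.limsup (fun x : ℝ => ENNReal.ofReal ((countAbs A x : ℝ) / Real.sqrt x))
        Filter.atTop := by
    intro n
    refine le_limsup_of_frequently_le ?_
    rw [Filter.frequently_atTop]
    intro X
    obtain ⟨m, hm⟩ := exists_nat_ge X
    obtain ⟨p, hp, hcard⟩ := hdense (max n m)
    have hp1 : (1 : ℝ) ≤ p := by exact_mod_cast (show 1 ≤ p by omega)
    have hpm : (m : ℝ) ≤ p := by
      exact_mod_cast ((le_max_right n m).trans hp.le)
    refine ⟨2 * (p : ℝ) ^ 2, by nlinarith, ENNReal.ofReal_le_ofReal ?_⟩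
    have hfin : {a : ℤ | a ∈ A ∧ |(a : ℝ)| ≤ 2 * (p : ℝ) ^ 2}.Finite := by
      refine (Set.finite_Icc (-(2 * (p : ℤ) ^ 2)) (2 * (p : ℤ) ^ 2)).subset ?_
      rintro a ⟨-, ha⟩
      have : |a| ≤ 2 * (p : ℤ) ^ 2 := by exact_mod_cast ha
      exact abs_le.1 this
    have hcount : ((F (max n m + 1)).filter fun b => |b| ≤ 2 * (p : ℤ) ^ 2).card ≤
        countAbs A (2 * (p : ℝ) ^ 2) := by
      rw [countAbs, ← Set.ncard_coe_finset]
      refine Set.ncard_le_ncard ?_ hfin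
      intro a ha
      rw [Finset.mem_coe, Finset.mem_filter] at ha
      exact ⟨⟨_, ha.1⟩, by exact_mod_cast ha.2⟩
    have hsqrt : Real.sqrt (2 * (p : ℝ) ^ 2) = Real.sqrt 2 * p := by
      rw [Real.sqrt_mul (by norm_num), Real.sqrt_sq (by positivity)]
    have h1 : (1 - 1 / ((n : ℝ) + 1)) ≤ 1 - 1 / (((max n m : ℕ) : ℝ) + 1) := by
      have : (n : ℝ) ≤ ((max n m : ℕ) : ℝ) := by exact_mod_cast le_max_left n m
      gcongr
    have h2 : (1 - 1 / ((n : ℝ) + 1)) * p ≤ (countAbs A (2 * (p : ℝ) ^ 2) : ℝ) :=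
      (mul_le_mul_of_nonneg_right h1 (by positivity)).trans
        (hcard.trans (by exact_mod_cast hcount))
    rw [hsqrt, le_div_iff₀ (by positivity)]
    calc (1 - 1 / ((n : ℝ) + 1)) * (1 / Real.sqrt 2) * (Real.sqrt 2 * p)
        = (1 - 1 / ((n : ℝ) + 1)) * p := by field_simp
      _ ≤ _ := h2
  have hlim : Tendsto (fun n : ℕ => (1 - 1 / ((n : ℝ) + 1)) * (1 / Real.sqrt 2)) atTop
      (nhds (1 / Real.sqrt 2)) := by
    have := ((tendsto_const_nhds (x := (1 : ℝ))).sub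
      (tendsto_one_div_add_atTop_nhds_zero_nat (𝕜 := ℝ))).mul_const (1 / Real.sqrt 2)
    simpa using this
  exact le_of_tendsto' (ENNReal.tendsto_ofReal hlim) hlow
end

section
/- Let h ≥ 2 be an integer and let f : ℤ → ℕ ∪ {∞} be any function such that liminf_{|n|→∞} f(n) ≥ 1. For any increasing function ω : [1,∞) → (0,∞) tending to infinity there exists a set A of integers such that r_{A,h}(n) = f(n) for all integers n and limsup_{x→∞} A(x)·ω(x)/x^{1/h} > 0. -/
/-!
The set `A` is the union of an increasing sequence of finite sets. Each of them satisfies the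
invariant `Admissible`: sums of fewer than `h` elements determine their summands, and the
representation function of order `h` is at most `f`. As `f ≥ 1` outside some interval `[-K, K]`, an
extension of a finite set preserves the invariant as soon as the representations that use new
elements have pairwise distinct sums, all outside `[-K, K]` and different from the sums of `h` old
elements (`Admissible.extend`); the invariant on fewer than `h` summands takes care of the old part
of such a representation.

Two kinds of extension alternate. If a prescribed `n` still has fewer than `f n` representations,
`rep_step` adds exactly one, using `h` generic new elements of sum `n`. Every `n` is prescribed
infinitely often, so the union has representation function `f`. Then `dense_step` adjoins a dilated
and translated Bose–Chowla `B_h` set (`bose_chowla`), of size `p` in an interval of length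
`M * p ^ h`. The dilation factor `M` depends on the set built so far but not on `p`, so for large
`p` the factor `ω` outweighs it, and the normalized counting function is at least `1` at some point.
This happens at every stage, so the limsup is positive.
-/

open Filter Set

/-! ### Representations as multisets -/

/-- The `h`-fold representations of `n` over `A`, encoded as multisets of cardinality `h` (in place
of the monotone `h`-tuples of `repFn`). -/
def Reps (A : Set ℤ) (h : ℕ) (n : ℤ) : Set (Multiset ℤ) :=
  {s | s.card = h ∧ (∀ x ∈ s, x ∈ A) ∧ s.sum = n}

/-- Sorting identifies multisets of size `h` with monotone `h`-tuples. -/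
lemma repFn_eq (A : Set ℤ) (h : ℕ) (n : ℤ) : repFn A h n = (Reps A h n).encard := by
  unfold repFn
  have hinj : InjOn (fun a : Fin h → ℤ => (List.ofFn a : Multiset ℤ))
      {a : Fin h → ℤ | Monotone a ∧ (∀ i, a i ∈ A) ∧ ∑ i, a i = n} := by
    intro a ha b hb hab
    apply List.ofFn_injective
    exact (Multiset.coe_eq_coe.1 hab).eq_of_pairwise' (List.pairwise_ofFn.2 fun i j hij => ha.1 hij.le)
      (List.pairwise_ofFn.2 fun i j hij => hb.1 hij.le)
  rw [← hinj.encard_image]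
  congr 1
  ext s
  constructor
  · rintro ⟨a, ⟨-, h2, h3⟩, rfl⟩
    refine ⟨by simp, ?_, ?_⟩
    · intro x hx
      simp only [Multiset.mem_coe, List.mem_ofFn] at hx
      obtain ⟨i, rfl⟩ := hx
      exact h2 i
    · simp [← h3, List.sum_ofFn]
  · rintro ⟨rfl, h2, h3⟩
    have hlen : (s.sort (· ≤ ·)).length = s.card := by simp
    have hof : List.ofFn (fun i : Fin s.card => (s.sort (· ≤ ·)).get (i.cast hlen.symm)) = s.sort (· ≤ ·) := by
      apply List.ext_get
      · simp
      · intros; simp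
    refine ⟨fun i => (s.sort (· ≤ ·)).get (i.cast hlen.symm), ⟨?_, ?_, ?_⟩, ?_⟩
    · intro i j hij
      have := Multiset.pairwise_sort s (· ≤ ·)
      exact this.sortedLE.monotone_get (by simpa using hij)
    · intro i
      apply h2
      rw [← Multiset.mem_sort (· ≤ ·)]
      exact List.get_mem _ _
    · rw [← List.sum_ofFn, hof, ← Multiset.sum_coe, Multiset.sort_eq, h3]
    · simp only
      rw [hof, Multiset.sort_eq]

lemma Reps_mono {A B : Set ℤ} (hAB : A ⊆ B) (h : ℕ) (n : ℤ) : Reps A h n ⊆ Reps B h n :=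
  fun _ hs => ⟨hs.1, fun x hx => hAB (hs.2.1 x hx), hs.2.2⟩

lemma countAbs_mono {A B : Set ℤ} (hAB : A ⊆ B) (x : ℝ) : countAbs A x ≤ countAbs B x := by
  apply Set.ncard_le_ncard
  · exact fun a ha => ⟨hAB ha.1, ha.2⟩
  · apply (Set.finite_Icc (-⌈x⌉) ⌈x⌉).subset
    rintro a ⟨-, ha⟩
    have h1 := abs_le.1 ha
    have h2 := Int.le_ceil x
    constructor
    · have : (-⌈x⌉ : ℝ) ≤ a := by linarith
      exact_mod_cast this
    · have : (a : ℝ) ≤ ⌈x⌉ := by linarith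
      exact_mod_cast this

/-! ### The Bose–Chowla theorem -/

/-- Bose–Chowla: a `B_h` set of size `p` in `[0, p ^ h)`. If `θ` generates the field with `p ^ h`
elements over `𝔽_p`, then `d a` is the discrete logarithm of `θ - a`. Equal sums of logarithms mean
equal products `∏ (θ - a)`, and two monic polynomials of the same degree at most `h` that agree at
`θ` are equal, since `θ` has degree `h`. -/
lemma bose_chowla (h : ℕ) (hh : 2 ≤ h) (p : ℕ) [Fact p.Prime] :
    ∃ d : ZMod p → ℕ, (∀ a, d a < p ^ h) ∧ ∀ β β' : Multiset (ZMod p), β.card = β'.card →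
      β.card ≤ h → (β.map d).sum = (β'.map d).sum → β = β' := by
  classical
  let K := GaloisField p h
  have : Fintype K := Fintype.ofFinite K
  have hrank : Module.finrank (ZMod p) K = h := GaloisField.finrank p (by omega)
  obtain ⟨θ, hθ⟩ := Field.exists_primitive_element (ZMod p) K
  have hθint : IsIntegral (ZMod p) θ := Algebra.IsIntegral.isIntegral θ
  have hdeg : (minpoly (ZMod p) θ).natDegree = h := by
    exact ((Field.primitive_element_iff_minpoly_natDegree_eq (ZMod p) θ).1 hθ).trans hrank
  have hsmall : ∀ P : Polynomial (ZMod p), P.degree < h → Polynomial.aeval θ P = 0 → P = 0 := by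
    intro P hP h0
    by_contra hne
    have := minpoly.degree_le_of_ne_zero (ZMod p) θ hne h0
    rw [Polynomial.degree_eq_natDegree (minpoly.ne_zero hθint), hdeg] at this
    exact absurd hP (not_lt.2 this)
  have hne : ∀ a : ZMod p, θ - algebraMap (ZMod p) K a ≠ 0 := by
    intro a h0
    refine Polynomial.X_sub_C_ne_zero a (hsmall _ ?_ (by simpa using h0))
    rw [Polynomial.degree_X_sub_C]
    exact_mod_cast hh
  obtain ⟨g, hg⟩ := IsCyclic.exists_generator (α := Kˣ)
  have hex : ∀ a : ZMod p, ∃ d : ℕ, d < p ^ h ∧ g ^ d = Units.mk0 _ (hne a) := by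
    intro a
    obtain ⟨d, hd, hd'⟩ := (IsOfFinOrder.mem_powers_iff_mem_range_orderOf (isOfFinOrder_of_finite g)).1
        ((mem_powers_iff_mem_zpowers).2 (hg (Units.mk0 _ (hne a)))) |> Finset.mem_image.1
    refine ⟨d, ?_, hd'⟩
    have h1 := Finset.mem_range.1 hd
    have h2 : orderOf g ≤ Nat.card Kˣ := Nat.le_of_dvd Nat.card_pos (orderOf_dvd_natCard g)
    have h3 : Nat.card Kˣ ≤ Nat.card K := Nat.card_le_card_of_injective _ Units.val_injective
    have h4 : Nat.card K = p ^ h := GaloisField.card p h (by omega)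
    omega
  choose d hd hgd using hex
  refine ⟨d, hd, ?_⟩
  have key : ∀ β : Multiset (ZMod p), Polynomial.aeval θ
      (β.map fun a => Polynomial.X - Polynomial.C a).prod = ((g ^ (β.map d).sum : Kˣ) : K) := by
    intro β
    induction β using Multiset.induction_on with
    | empty => simp
    | cons a s ih =>
      simp only [Multiset.map_cons, Multiset.prod_cons, map_mul, ih, Multiset.sum_cons, pow_add, hgd]
      simp
  intro β β' hcard hle hsum
  have hmonic : ∀ β : Multiset (ZMod p),
      (β.map fun a => Polynomial.X - Polynomial.C a).prod.Monic := fun β =>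
    Polynomial.monic_multiset_prod_of_monic β (fun a => Polynomial.X - Polynomial.C a)
      fun a _ => Polynomial.monic_X_sub_C a
  have hdegβ : ∀ β : Multiset (ZMod p),
      (β.map fun a => Polynomial.X - Polynomial.C a).prod.degree = ((β.card : ℕ) : WithBot ℕ) := by
    intro β
    rw [Polynomial.degree_eq_natDegree (hmonic β).ne_zero,
      Polynomial.natDegree_multiset_prod_X_sub_C_eq_card]
  have hdiff := hsmall ((β.map fun a => Polynomial.X - Polynomial.C a).prod -
      (β'.map fun a => Polynomial.X - Polynomial.C a).prod) (by
        refine (Polynomial.degree_sub_lt_left ?_ (hmonic β).ne_zero ?_).trans_le ?_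
        · rw [hdegβ, hdegβ, hcard]
        · rw [(hmonic β).leadingCoeff, (hmonic β').leadingCoeff]
        · rw [hdegβ]; exact_mod_cast hle) (by rw [map_sub, key, key, hsum, sub_self])
  rw [← Polynomial.roots_multiset_prod_X_sub_C β, sub_eq_zero.1 hdiff,
    Polynomial.roots_multiset_prod_X_sub_C]

/-! ### Admissible sets and their extensions -/

/-- The invariant of the construction: `A` is finite, sums of `j < h` elements of `A` determine the
summands, and no integer `n` has more than `f n` representations of order `h`. -/
structure Admissible (f : ℤ → ℕ∞) (h : ℕ) (A : Set ℤ) : Prop where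
  fin : A.Finite
  uniq : ∀ s s' : Multiset ℤ, (∀ x ∈ s, x ∈ A) → (∀ x ∈ s', x ∈ A) → s.card = s'.card →
    s.card < h → s.sum = s'.sum → s = s'
  le : ∀ n, (Reps A h n).encard ≤ f n

/-- A multiset over `A ∪ range φ` is the sum of a multiset of new elements, recorded by the indices
`β`, and a multiset `α` of old ones. -/
lemma split {ι : Type*} (A : Set ℤ) (φ : ι → ℤ) (s : Multiset ℤ)
    (hs : ∀ x ∈ s, x ∈ A ∪ range φ) :
    ∃ (β : Multiset ι) (α : Multiset ℤ), (∀ x ∈ α, x ∈ A) ∧ s = β.map φ + α := by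
  induction s using Multiset.induction_on with
  | empty => exact ⟨0, 0, by simp, by simp⟩
  | cons a s ih =>
    obtain ⟨β, α, hα, rfl⟩ := ih fun x hx => hs x (Multiset.mem_cons_of_mem hx)
    rcases hs a (Multiset.mem_cons_self _ _) with ha | ⟨i, rfl⟩
    · refine ⟨β, a ::ₘ α, ?_, by simp⟩
      intro x hx
      rcases Multiset.mem_cons.1 hx with rfl | hx
      · exact ha
      · exact hα x hx
    · exact ⟨i ::ₘ β, α, hα, by simp⟩

/-- Adjoining `range φ` keeps `A` admissible, provided the sum determines the new part `β` of a
representation (`hP`) and new representations avoid the interval `[-K, K]` outside which `f ≥ 1`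
(`hQ`). One exceptional new part `β₀` of full size `h` is allowed, whose sum may coincide with sums
of old elements; it then creates exactly one new representation of that sum. The choice `β₀ = 0`
means that there is no exception. -/
lemma Admissible.extend {f : ℤ → ℕ∞} {h : ℕ} (hh : 2 ≤ h) {K : ℤ} (hK : ∀ n, K < |n| → 1 ≤ f n)
    {A : Set ℤ} (hA : Admissible f h A) {ι : Type*} [Finite ι] (φ : ι → ℤ) (β₀ : Multiset ι)
    (hβ₀ : β₀ = 0 ∨ β₀.card = h ∧ (Reps A h (β₀.map φ).sum).encard < f (β₀.map φ).sum)
    (hP : ∀ (β β' : Multiset ι) (α α' : Multiset ℤ), (∀ x ∈ α, x ∈ A) → (∀ x ∈ α', x ∈ A) →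
      β.card + α.card = β'.card + α'.card → β.card + α.card ≤ h →
      (β.map φ).sum + α.sum = (β'.map φ).sum + α'.sum →
      β = β' ∨ (β = 0 ∧ β' = β₀) ∨ (β = β₀ ∧ β' = 0))
    (hQ : ∀ (β : Multiset ι) (α : Multiset ℤ), (∀ x ∈ α, x ∈ A) → β.card + α.card ≤ h →
      β ≠ 0 → β ≠ β₀ → K < |(β.map φ).sum + α.sum|) :
    Admissible f h (A ∪ range φ) ∧
      (β₀ ≠ 0 → (Reps A h (β₀.map φ).sum).encard + 1 ≤
        (Reps (A ∪ range φ) h (β₀.map φ).sum).encard) := by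
  have same : ∀ (β : Multiset ι) (α α' : Multiset ℤ), (∀ x ∈ α, x ∈ A) → (∀ x ∈ α', x ∈ A) →
      α.card = α'.card → α.card < h → (β.map φ).sum + α.sum = (β.map φ).sum + α'.sum → α = α' := by
    intro β α α' h1 h2 h3 h4 h5
    exact hA.uniq α α' h1 h2 h3 h4 (by linarith)
  refine ⟨⟨hA.fin.union (finite_range φ), ?_, ?_⟩, ?_⟩
  · intro s s' hs hs' hc hlt hsum
    obtain ⟨β, α, hα, rfl⟩ := split A φ s hs
    obtain ⟨β', α', hα', rfl⟩ := split A φ s' hs'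
    simp only [Multiset.card_add, Multiset.card_map, Multiset.sum_add] at hc hlt hsum
    have hββ : β = β' := by
      rcases hP β β' α α' hα hα' hc hlt.le hsum with h1 | ⟨h1, h2⟩ | ⟨h1, h2⟩
      · exact h1
      · rcases hβ₀ with h3 | ⟨h3, -⟩
        · rw [h1, h2, h3]
        · rw [h2] at hc; omega
      · rcases hβ₀ with h3 | ⟨h3, -⟩
        · rw [h1, h2, h3]
        · rw [h1] at hlt; omega
    subst hββ
    rw [same β α α' hα hα' (by omega) (by omega) hsum]
  · intro n
    by_cases hnew : ∃ (β : Multiset ι) (α : Multiset ℤ), (∀ x ∈ α, x ∈ A) ∧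
        β.card + α.card = h ∧ (β.map φ).sum + α.sum = n ∧ β ≠ 0
    · obtain ⟨β, α, hα, hc, hsum, hne⟩ := hnew
      by_cases hb : β = β₀
      -- `n` is the sum of `β₀`, and gains that single representation
      · subst hb
        obtain ⟨h1, h2⟩ := hβ₀.resolve_left hne
        have hα0 : α = 0 := Multiset.card_eq_zero.1 (by omega)
        subst hα0
        simp only [Multiset.sum_zero, add_zero] at hsum
        rw [hsum] at h2
        have hsub : Reps (A ∪ range φ) h n ⊆ insert (β.map φ) (Reps A h n) := by
          rintro s ⟨hs1, hs2, hs3⟩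
          obtain ⟨β', α', hα', rfl⟩ := split A φ s hs2
          simp only [Multiset.card_add, Multiset.card_map, Multiset.sum_add] at hs1 hs3
          rcases hP β β' 0 α' hα hα' (by omega) (by omega) (by simp; omega) with h3 | ⟨h3, h4⟩ | ⟨h3, h4⟩
          · subst h3
            have : α' = 0 := Multiset.card_eq_zero.1 (by omega)
            left; simp [this]
          · exact absurd h3 hne
          · right
            subst h4
            simp only [Multiset.map_zero, zero_add, Multiset.sum_zero, Multiset.card_zero] at hs1 hs3 ⊢
            exact ⟨hs1, hα', hs3⟩
        exact (encard_le_encard hsub).trans ((encard_insert_le _ _).trans (Order.add_one_le_of_lt h2))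
      -- an ordinary new representation is the only representation of its sum
      · have hsub : Reps (A ∪ range φ) h n ⊆ {β.map φ + α} := by
          rintro s ⟨hs1, hs2, hs3⟩
          obtain ⟨β', α', hα', rfl⟩ := split A φ s hs2
          simp only [Multiset.card_add, Multiset.card_map, Multiset.sum_add] at hs1 hs3
          rcases hP β β' α α' hα hα' (by omega) (by omega) (by omega) with h3 | ⟨h3, h4⟩ | ⟨h3, h4⟩
          · subst h3
            have hpos := Multiset.card_pos.2 hne
            rw [same β α α' hα hα' (by omega) (by omega) (by omega)]
            rfl
          · exact absurd h3 hne
          · exact absurd h3 hb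
        refine (encard_le_encard hsub).trans ?_
        rw [encard_singleton]
        apply hK
        rw [← hsum]
        exact hQ β α hα hc.le hne hb
    · push Not at hnew
      refine (encard_le_encard ?_).trans (hA.le n)
      rintro s ⟨hs1, hs2, hs3⟩
      obtain ⟨β, α, hα, rfl⟩ := split A φ s hs2
      simp only [Multiset.card_add, Multiset.card_map, Multiset.sum_add] at hs1 hs3
      have h0 := hnew β α hα hs1 hs3
      subst h0
      simp only [Multiset.map_zero, zero_add, Multiset.sum_zero, Multiset.card_zero] at hs1 hs3 ⊢
      exact ⟨hs1, hα, hs3⟩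
  · intro hne
    obtain ⟨h1, h2⟩ := hβ₀.resolve_left hne
    have hnot : β₀.map φ ∉ Reps A h (β₀.map φ).sum := by
      intro hmem
      obtain ⟨i, hi⟩ := Multiset.exists_mem_of_ne_zero hne
      have hiA : φ i ∈ A := hmem.2.1 _ (Multiset.mem_map_of_mem φ hi)
      rcases hP {i} 0 0 {φ i} (by simp) (by simpa using hiA) (by simp) (by simp; omega) (by simp)
        with h3 | ⟨h3, h4⟩ | ⟨h3, h4⟩
      · simp at h3
      · simp at h3
      · rw [← h3] at h1
        simp at h1; omega
    rw [← encard_insert_of_notMem hnot]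
    apply encard_le_encard
    rintro s (rfl | hs)
    · refine ⟨by simpa using h1, ?_, rfl⟩
      intro x hx
      obtain ⟨i, -, rfl⟩ := Multiset.mem_map.1 hx
      exact Or.inr ⟨i, rfl⟩
    · exact Reps_mono subset_union_left _ _ hs

/-! ### Dense extensions -/

lemma abs_sum_le {A : Set ℤ} {B : ℤ} (hB0 : 0 ≤ B) (hB : ∀ a ∈ A, |a| ≤ B) {h : ℕ} (α : Multiset ℤ)
    (hα : ∀ x ∈ α, x ∈ A) (hc : α.card ≤ h) : |α.sum| ≤ h * B := by
  have h1 : |α.sum| ≤ α.card * B := by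
    clear hc
    induction α using Multiset.induction_on with
    | empty => simp
    | cons a s ih =>
      have h2 := ih fun x hx => hα x (Multiset.mem_cons_of_mem hx)
      have h3 := hB a (hα a (Multiset.mem_cons_self _ _))
      have h4 := abs_add_le a s.sum
      simp only [Multiset.sum_cons, Multiset.card_cons, Nat.cast_add, Nat.cast_one]
      linarith
  have h5 : (α.card : ℤ) ≤ h := by exact_mod_cast hc
  nlinarith

lemma exists_bound {A : Set ℤ} (hA : A.Finite) : ∃ B : ℤ, 0 ≤ B ∧ ∀ a ∈ A, |a| ≤ B := by
  obtain ⟨B, hB⟩ := (hA.image fun a => |a|).bddAbove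
  exact ⟨max B 0, le_max_right _ _, fun a ha =>
    (hB (mem_image_of_mem _ ha)).trans (le_max_left _ _)⟩

/-- An admissible set extends to an admissible set of counting function at least
`x ^ (1 / h) / ω x` at some large `x`. The new elements are `M * d a + t`, with `d` the Bose–Chowla
set for a prime `p`. The scales `1 ≪ t ≪ M` depend on `A` only and let one read off from a sum the
sum of the `d a` and the number of new summands. At `x = M * p ^ h` there are `p` new elements,
which is `x ^ (1 / h)` up to the constant `M ^ (1 / h)`; taking `p` large makes `ω x` absorb it. -/
lemma dense_step {f : ℤ → ℕ∞} {h : ℕ} (hh : 2 ≤ h) {K : ℤ} (hK0 : 0 ≤ K)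
    (hK : ∀ n, K < |n| → 1 ≤ f n) {ω : ℝ → ℝ} (hωlim : Tendsto ω atTop atTop)
    {A : Set ℤ} (hA : Admissible f h A) (X : ℝ) :
    ∃ A', A ⊆ A' ∧ Admissible f h A' ∧
      ∃ x, X ≤ x ∧ 1 ≤ (countAbs A' x : ℝ) * ω x / x ^ ((1 : ℝ) / h) := by
  obtain ⟨B, hB0, hB⟩ := exists_bound hA.fin
  obtain ⟨L, hL⟩ : ∃ L : ℤ, L = h * B := ⟨_, rfl⟩
  have hh' : (2 : ℤ) ≤ h := by exact_mod_cast hh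
  have hL0 : 0 ≤ L := by rw [hL]; positivity
  obtain ⟨t, ht⟩ : ∃ t : ℤ, t = 2 * L + K + 1 := ⟨_, rfl⟩
  have ht0 : 0 < t := by omega
  obtain ⟨M, hM⟩ : ∃ M : ℤ, M = (h + 1) * t := ⟨_, rfl⟩
  have htM : t ≤ M := by rw [hM]; nlinarith
  have hM1 : 1 ≤ M := by omega
  obtain ⟨Y, hY⟩ := (tendsto_atTop_atTop.1 hωlim) (M : ℝ)
  obtain ⟨p, hp, hprime⟩ := Nat.exists_infinite_primes ⌈max X Y⌉₊
  have : Fact p.Prime := ⟨hprime⟩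
  obtain ⟨d, hd, hinj⟩ := bose_chowla h hh p
  obtain ⟨φ, hφ⟩ : ∃ φ : ZMod p → ℤ, ∀ a, φ a = M * d a + t := ⟨fun a => M * d a + t, fun _ => rfl⟩
  have hφsum : ∀ β : Multiset (ZMod p),
      (β.map φ).sum = M * ((β.map d).sum : ℕ) + β.card * t := by
    intro β
    induction β using Multiset.induction_on with
    | empty => simp
    | cons a s ih =>
      rw [Multiset.map_cons, Multiset.sum_cons, ih, hφ, Multiset.map_cons, Multiset.sum_cons,
        Multiset.card_cons, Nat.cast_add, Nat.cast_add, Nat.cast_one]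
      ring
  have hφinj : Function.Injective φ := by
    intro a b hab
    rw [hφ, hφ] at hab
    have h1 : (d a : ℤ) = d b := by
      have : M * (d a : ℤ) = M * d b := by linarith
      exact mul_left_cancel₀ (by omega) this
    have := hinj {a} {b} (by simp) (by simp; omega) (by simpa using h1)
    simpa using this
  obtain ⟨hadm, -⟩ := hA.extend hh hK φ 0 (Or.inl rfl) (by
    intro β β' α α' hα hα' hc hle hsum
    left
    have e1 := abs_le.1 (hL ▸ abs_sum_le hB0 hB α hα (by omega : α.card ≤ h))
    have e2 := abs_le.1 (hL ▸ abs_sum_le hB0 hB α' hα' (by omega : α'.card ≤ h))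
    rw [hφsum, hφsum] at hsum
    have c1 : (β.card : ℤ) ≤ h := by exact_mod_cast (by omega : β.card ≤ h)
    have c2 : (β'.card : ℤ) ≤ h := by exact_mod_cast (by omega : β'.card ≤ h)
    have c3 : (0 : ℤ) ≤ β.card := by positivity
    have c4 : (0 : ℤ) ≤ β'.card := by positivity
    have s1 : ((β.map d).sum : ℤ) - ((β'.map d).sum : ℕ) = 0 := by
      refine (mul_eq_zero.1 (Int.eq_zero_of_abs_lt_dvd (Dvd.intro _ rfl) (m := M) ?_)).resolve_left
        (by omega)
      rw [abs_lt]
      constructor <;> nlinarith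
    have s2 : (β.card : ℤ) - β'.card = 0 := by
      have s3 : ((β.card : ℤ) - β'.card) * t = α'.sum - α.sum := by
        linear_combination hsum - M * s1
      refine (mul_eq_zero.1 (Int.eq_zero_of_abs_lt_dvd (Dvd.intro_left _ rfl) (m := t) ?_)).resolve_right
        ht0.ne'
      rw [s3, abs_lt]
      constructor <;> linarith
    exact hinj β β' (by omega) (by omega) (by omega)) (by
    intro β α hα hc hne _
    have e1 := abs_le.1 (hL ▸ abs_sum_le hB0 hB α hα (by omega : α.card ≤ h))
    rw [hφsum]
    refine lt_of_lt_of_le ?_ (le_abs_self _)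
    have c1 : (1 : ℤ) ≤ β.card := by exact_mod_cast Multiset.card_pos.2 hne
    have c2 : (0 : ℤ) ≤ M * ((β.map d).sum : ℕ) := by positivity
    nlinarith)
  refine ⟨_, subset_union_left, hadm, (M : ℝ) * (p : ℝ) ^ h, ?_⟩
  have hp' : max X Y ≤ (p : ℝ) := Nat.ceil_le.1 hp
  have hM1' : (1 : ℝ) ≤ M := by exact_mod_cast hM1
  have hp1 : (1 : ℝ) ≤ p := by exact_mod_cast hprime.one_le
  have hpx : (p : ℝ) ≤ M * (p : ℝ) ^ h := by
    have : (p : ℝ) ≤ (p : ℝ) ^ h := le_self_pow₀ hp1 (by omega)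
    nlinarith
  refine ⟨(le_max_left X Y).trans (hp'.trans hpx), ?_⟩
  have hω := hY _ ((le_max_right X Y).trans (hp'.trans hpx))
  have hcount : p ≤ countAbs (A ∪ range φ) (M * (p : ℝ) ^ h) := by
    have h1 : (range φ).ncard = p := by
      rw [← image_univ, ncard_image_of_injective _ hφinj, ncard_univ, Nat.card_zmod]
    refine h1.symm.le.trans (ncard_le_ncard ?_ ?_)
    · rintro _ ⟨a, rfl⟩
      refine ⟨Or.inr ⟨a, rfl⟩, ?_⟩
      have h2 : (d a : ℤ) + 1 ≤ (p : ℤ) ^ h := by exact_mod_cast hd a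
      have h3 : |φ a| ≤ M * (p : ℤ) ^ h := by
        rw [hφ, abs_of_nonneg (by positivity)]
        nlinarith
      exact_mod_cast h3
    · exact hadm.fin.subset fun a ha => ha.1
  have hpow : (M * (p : ℝ) ^ h) ^ ((1 : ℝ) / h) ≤ M * p := by
    have h0 : (h : ℝ) ≠ 0 := by positivity
    rw [Real.mul_rpow (by positivity) (by positivity), one_div, Real.pow_rpow_inv_natCast (by positivity) (by omega)]
    gcongr
    calc (M : ℝ) ^ ((h : ℝ)⁻¹) ≤ (M : ℝ) ^ (1 : ℝ) := by
          apply Real.rpow_le_rpow_of_exponent_le hM1'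
          apply inv_le_one_of_one_le₀
          exact_mod_cast (by omega : 1 ≤ h)
      _ = M := Real.rpow_one _
  rw [one_le_div (by positivity)]
  refine hpow.trans ?_
  rw [mul_comm]
  gcongr

/-! ### Adding one representation of a given integer -/

/-- Widely spaced weights, as in a number system of large base: no nonzero digit vector bounded by
`H` has weighted sum in `[-K, K]`. -/
lemma exists_weights (m : ℕ) (H K : ℤ) (hK : 0 ≤ K) :
    ∃ w : Fin m → ℤ, ∀ δ : Fin m → ℤ, (∀ i, |δ i| ≤ H) → |∑ i, δ i * w i| ≤ K → δ = 0 := by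
  induction m with
  | zero => exact ⟨0, fun δ _ _ => Subsingleton.elim _ _⟩
  | succ m ih =>
    obtain ⟨w, hw⟩ := ih
    refine ⟨Fin.cons (K + 1 + ∑ i, H * |w i|) w, fun δ hδ hs => ?_⟩
    simp only [Fin.sum_univ_succ, Fin.cons_zero, Fin.cons_succ] at hs
    have hb : |∑ i : Fin m, δ i.succ * w i| ≤ ∑ i, H * |w i| := by
      refine (Finset.abs_sum_le_sum_abs _ _).trans (Finset.sum_le_sum fun i _ => ?_)
      rw [abs_mul]
      exact mul_le_mul_of_nonneg_right (hδ _) (abs_nonneg _)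
    have h0 : δ 0 = 0 := by
      have hb' := abs_le.1 hb
      have hs' := abs_le.1 hs
      have hS : 0 ≤ ∑ i, H * |w i| := (abs_nonneg _).trans hb
      rcases lt_trichotomy (δ 0) 0 with h1 | h1 | h1
      · nlinarith
      · exact h1
      · nlinarith
    rw [h0, zero_mul, zero_add] at hs
    have h1 := hw (fun i => δ i.succ) (fun i => hδ _) hs
    funext i
    refine Fin.cases h0 (fun j => congrFun h1 j) i

/-- One more representation of `n`: adjoin widely spaced `w₁, …, w_{h-1}` together with
`n - ∑ wᵢ`. A sum involving these elements with multiplicities `mᵢ` (and `m₀` for the last one)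
determines the differences `mᵢ - m₀`, so the `mᵢ` are determined up to a common shift. As there are
at most `h` summands, a nonzero shift is possible only between the empty multiset and the one using
each new element once. -/
lemma rep_step {f : ℤ → ℕ∞} {h : ℕ} (hh : 2 ≤ h) {K : ℤ} (hK0 : 0 ≤ K)
    (hK : ∀ n, K < |n| → 1 ≤ f n) {A : Set ℤ} (hA : Admissible f h A) (n : ℤ)
    (hn : (Reps A h n).encard < f n) :
    ∃ A', A ⊆ A' ∧ Admissible f h A' ∧ (Reps A h n).encard + 1 ≤ (Reps A' h n).encard := by
  classical
  obtain ⟨m, rfl⟩ : ∃ m, h = m + 1 := ⟨h - 1, by omega⟩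
  obtain ⟨B, hB0, hB⟩ := exists_bound hA.fin
  obtain ⟨L, hL⟩ : ∃ L : ℤ, L = (m + 1 : ℕ) * B := ⟨_, rfl⟩
  have hL0 : 0 ≤ L := by rw [hL]; positivity
  obtain ⟨N, hN⟩ : ∃ N : ℤ, N = (m + 1 : ℕ) * |n| := ⟨_, rfl⟩
  have hN0 : 0 ≤ N := by rw [hN]; positivity
  obtain ⟨w, hw⟩ := exists_weights m (2 * (m + 1 : ℕ)) (K + 2 * N + 2 * L)
    (by positivity)
  obtain ⟨φ, hφ⟩ : ∃ φ : Fin (m + 1) → ℤ, φ = Fin.cons (n - ∑ i, w i) w := ⟨_, rfl⟩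
  have hφsum : ∀ β : Multiset (Fin (m + 1)), (β.map φ).sum =
      β.count 0 * n + ∑ i : Fin m, ((β.count i.succ : ℤ) - β.count 0) * w i := by
    intro β
    have : (β.map φ).sum = ∑ i, (β.count i : ℤ) * φ i := by
      rw [Finset.sum_multiset_map_count]
      simp only [nsmul_eq_mul]
      apply Finset.sum_subset (Finset.subset_univ _)
      intro i _ hi
      simp only [Multiset.mem_toFinset] at hi
      simp [Multiset.count_eq_zero.2 hi]
    rw [this, Fin.sum_univ_succ, hφ]
    simp only [Fin.cons_zero, Fin.cons_succ, sub_mul, Finset.sum_sub_distrib, ← Finset.mul_sum]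
    ring
  have hcount : ∀ (β : Multiset (Fin (m + 1))) i, β.card ≤ m + 1 →
      0 ≤ (β.count i : ℤ) ∧ (β.count i : ℤ) ≤ (m + 1 : ℕ) := fun β i hβ =>
    ⟨by positivity, by exact_mod_cast (Multiset.count_le_card i β).trans hβ⟩
  have hshift : ∀ (β β' : Multiset (Fin (m + 1))), β.card ≤ m + 1 → β'.count 0 < β.count 0 →
      (∀ i : Fin m, (β.count i.succ : ℤ) - β.count 0 = β'.count i.succ - β'.count 0) →
      β' = 0 ∧ β = Finset.univ.val := by
    intro β β' hc hlt hall
    have hge : Finset.univ.val + β' ≤ β := by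
      rw [Multiset.le_iff_count]
      intro i
      rw [Multiset.count_add, Multiset.count_univ]
      refine Fin.cases (by omega) (fun j => ?_) i
      have := hall j
      omega
    have h1 := Multiset.card_le_card hge
    simp only [Multiset.card_add, Finset.card_val, Finset.card_univ, Fintype.card_fin] at h1
    have h2 : β' = 0 := Multiset.card_eq_zero.1 (by omega)
    subst h2
    rw [add_zero] at hge
    refine ⟨rfl, (Multiset.eq_of_le_of_card_le hge ?_).symm⟩
    simpa using hc
  have hmul : ∀ c : ℤ, |c| ≤ (m + 1 : ℕ) → |c * n| ≤ N := by
    intro c hc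
    rw [abs_mul, hN]
    exact mul_le_mul_of_nonneg_right hc (abs_nonneg _)
  have huniv : ((Finset.univ.val : Multiset (Fin (m + 1))).map φ).sum = n := by
    rw [hφsum]; simp [Multiset.count_univ]
  obtain ⟨hadm, hinc⟩ := hA.extend hh hK φ Finset.univ.val
    (Or.inr ⟨by simp, by rw [huniv]; exact hn⟩) (by
    intro β β' α α' hα hα' hc hle hsum
    have e1 := abs_le.1 (hL ▸ abs_sum_le hB0 hB α hα (by omega : α.card ≤ m + 1))
    have e2 := abs_le.1 (hL ▸ abs_sum_le hB0 hB α' hα' (by omega : α'.card ≤ m + 1))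
    rw [hφsum, hφsum] at hsum
    have h0 := hw (fun i => ((β.count i.succ : ℤ) - β.count 0) - (β'.count i.succ - β'.count 0)) (by
      intro i
      have a1 := hcount β i.succ (by omega)
      have a2 := hcount β 0 (by omega)
      have a3 := hcount β' i.succ (by omega)
      have a4 := hcount β' 0 (by omega)
      rw [abs_le]; constructor <;> linarith) (by
      simp only [sub_mul _ _ (w _), Finset.sum_sub_distrib] at hsum ⊢
      have a2 := hcount β 0 (by omega)
      have a4 := hcount β' 0 (by omega)
      have b2 := abs_le.1 (hmul (β.count 0) (by rw [abs_of_nonneg a2.1]; exact a2.2))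
      have b4 := abs_le.1 (hmul (β'.count 0) (by rw [abs_of_nonneg a4.1]; exact a4.2))
      rw [abs_le]; constructor <;> linarith)
    have hall : ∀ i : Fin m, (β.count i.succ : ℤ) - β.count 0 = β'.count i.succ - β'.count 0 :=
      fun i => sub_eq_zero.1 (congrFun h0 i)
    rcases lt_trichotomy (β.count 0) (β'.count 0) with h1 | h1 | h1
    · exact Or.inr (Or.inl (hshift β' β (by omega) h1 fun i => (hall i).symm))
    · left
      ext i
      refine Fin.cases h1 (fun j => ?_) i
      have := hall j
      omega
    · exact Or.inr (Or.inr (hshift β β' (by omega) h1 hall).symm)) (by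
    intro β α hα hc hne hne'
    by_contra! hlt
    have e1 := abs_le.1 (hL ▸ abs_sum_le hB0 hB α hα (by omega : α.card ≤ m + 1))
    rw [hφsum] at hlt
    have h0 := hw (fun i => ((β.count i.succ : ℤ) - β.count 0)) (by
      intro i
      have a1 := hcount β i.succ (by omega)
      have a2 := hcount β 0 (by omega)
      rw [abs_le]; constructor <;> linarith) (by
      have a2 := hcount β 0 (by omega)
      have b2 := abs_le.1 (hmul (β.count 0) (by rw [abs_of_nonneg a2.1]; exact a2.2))
      have hlt' := abs_le.1 hlt
      rw [abs_le]; constructor <;> linarith)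
    have hall : ∀ i : Fin m, (β.count i.succ : ℤ) - β.count 0 = 0 := fun i => congrFun h0 i
    rcases Nat.eq_zero_or_pos (β.count 0) with h1 | h1
    · apply hne
      ext i
      rw [Multiset.count_zero]
      refine Fin.cases h1 (fun j => ?_) i
      have := hall j
      omega
    · exact hne' (hshift β 0 (by omega) (by simpa using h1) (by simpa using hall)).2)
  refine ⟨_, subset_union_left, hadm, ?_⟩
  rw [huniv] at hinc
  apply hinc
  intro h0
  have := congrArg Multiset.card h0
  simp at this

/-! ### The limit of the construction -/

lemma step {f : ℤ → ℕ∞} {h : ℕ} (hh : 2 ≤ h) {K : ℤ} (hK0 : 0 ≤ K)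
    (hK : ∀ n, K < |n| → 1 ≤ f n) {ω : ℝ → ℝ} (hωlim : Tendsto ω atTop atTop)
    {A : Set ℤ} (hA : Admissible f h A) (n : ℤ) (X : ℝ) :
    ∃ A', A ⊆ A' ∧ Admissible f h A' ∧
      ((Reps A h n).encard < f n → (Reps A h n).encard + 1 ≤ (Reps A' h n).encard) ∧
      ∃ x, X ≤ x ∧ 1 ≤ (countAbs A' x : ℝ) * ω x / x ^ ((1 : ℝ) / h) := by
  obtain ⟨A₁, h1, h2, h3⟩ : ∃ A', A ⊆ A' ∧ Admissible f h A' ∧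
      ((Reps A h n).encard < f n → (Reps A h n).encard + 1 ≤ (Reps A' h n).encard) := by
    by_cases hn : (Reps A h n).encard < f n
    · obtain ⟨A', h1, h2, h3⟩ := rep_step hh hK0 hK hA n hn
      exact ⟨A', h1, h2, fun _ => h3⟩
    · exact ⟨A, subset_rfl, hA, fun h => absurd h hn⟩
  obtain ⟨A₂, h4, h5, h6⟩ := dense_step hh hK0 hK hωlim h2 X
  exact ⟨A₂, h1.trans h4, h5, fun hn => (h3 hn).trans (encard_le_encard (Reps_mono h4 _ _)), h6⟩

/-- Finitely many representations over an increasing union already live at a finite stage. -/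
lemma Reps_iUnion {A : ℕ → Set ℤ} (hA : Monotone A) {h : ℕ} {n : ℤ} {T : Set (Multiset ℤ)}
    (hT : T.Finite) (hsub : T ⊆ Reps (⋃ k, A k) h n) : ∃ k, T ⊆ Reps (A k) h n := by
  have key : ∀ s : Multiset ℤ, (∀ x ∈ s, x ∈ ⋃ k, A k) → ∃ k, ∀ x ∈ s, x ∈ A k := by
    intro s
    induction s using Multiset.induction_on with
    | empty => intro _; exact ⟨0, by simp⟩
    | cons a s ih =>
      intro hs
      obtain ⟨k, hk⟩ := ih fun x hx => hs x (Multiset.mem_cons_of_mem hx)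
      obtain ⟨l, hl⟩ := mem_iUnion.1 (hs a (Multiset.mem_cons_self _ _))
      refine ⟨max k l, fun x hx => ?_⟩
      rcases Multiset.mem_cons.1 hx with rfl | hx
      · exact hA (le_max_right k l) hl
      · exact hA (le_max_left k l) (hk x hx)
  induction T, hT using Set.Finite.induction_on with
  | empty => exact ⟨0, empty_subset _⟩
  | @insert s T _ _ ih =>
    obtain ⟨k, hk⟩ := ih ((subset_insert _ _).trans hsub)
    obtain ⟨hs1, hs2, hs3⟩ := hsub (mem_insert s T)
    obtain ⟨l, hl⟩ := key s hs2
    refine ⟨max k l, insert_subset ⟨hs1, fun x hx => hA (le_max_right k l) (hl x hx), hs3⟩ ?_⟩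
    exact hk.trans (Reps_mono (hA (le_max_left k l)) _ _)

theorem stmt_5 (h : ℕ) (hh : 2 ≤ h)
    (f : ℤ → ℕ∞) (hf : 1 ≤ Filter.liminf f Filter.cofinite)
    (ω : ℝ → ℝ) (hωpos : ∀ x : ℝ, 1 ≤ x → 0 < ω x)
    (hωmono : MonotoneOn ω (Set.Ici (1 : ℝ)))
    (hωlim : Filter.Tendsto ω Filter.atTop Filter.atTop) :
    ∃ A : Set ℤ, (∀ n : ℤ, repFn A h n = f n) ∧
      0 < Filter.limsup
            (fun x : ℝ => ENNReal.ofReal ((countAbs A x : ℝ) * ω x / x ^ ((1 : ℝ) / h)))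
            Filter.atTop := by
  obtain ⟨K, hK0, hK⟩ : ∃ K : ℤ, 0 ≤ K ∧ ∀ n, K < |n| → 1 ≤ f n := by
    have hev : ∀ᶠ n in cofinite, 0 < f n :=
      eventually_lt_of_lt_liminf (lt_of_lt_of_le zero_lt_one hf)
    obtain ⟨K, hK0, hK⟩ := exists_bound (eventually_cofinite.1 hev)
    refine ⟨K, hK0, fun n hn => ?_⟩
    by_contra hlt
    refine absurd (hK n fun hpos => hlt (Order.one_le_iff_pos.2 hpos)) (not_le.2 hn)
  -- an enumeration of `ℤ` in which every integer occurs infinitely often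
  let ν : ℕ → ℤ := fun k => (Denumerable.eqv ℤ).symm k.unpair.1
  have hν : ∀ n k, ∃ l ≥ k, ν l = n := fun n k =>
    ⟨Nat.pair (Denumerable.eqv ℤ n) k, Nat.right_le_pair _ _, by simp [ν]⟩
  have h0 : Admissible f h ∅ := by
    have hemp : ∀ s : Multiset ℤ, (∀ x ∈ s, x ∈ (∅ : Set ℤ)) → s = 0 := fun s hs =>
      Multiset.eq_zero_of_forall_notMem fun x hx => hs x hx
    refine ⟨finite_empty, fun s s' hs hs' _ _ _ => by rw [hemp s hs, hemp s' hs'], fun n => ?_⟩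
    have : Reps ∅ h n = ∅ := by
      rw [eq_empty_iff_forall_notMem]
      rintro s ⟨h1, h2, -⟩
      rw [hemp s h2] at h1
      simp at h1; omega
    simp [this]
  choose next hsub hadm hrep hdense using
    fun (A : {A : Set ℤ // Admissible f h A}) (k : ℕ) => step hh hK0 hK hωlim A.2 (ν k) k
  let S : ℕ → {A : Set ℤ // Admissible f h A} :=
    fun k => Nat.rec ⟨∅, h0⟩ (fun k A => ⟨next A k, hadm A k⟩) k
  have hS : ∀ k, (S (k + 1)).1 = next (S k) k := fun k => rfl
  have hmono : Monotone fun k => (S k).1 := monotone_nat_of_le_succ fun k => hsub (S k) k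
  have hle : ∀ k, (S k).1 ⊆ ⋃ k, (S k).1 := fun k => subset_iUnion (fun k => (S k).1) k
  refine ⟨⋃ k, (S k).1, fun n => ?_, ?_⟩
  · rw [repFn_eq]
    apply le_antisymm
    · by_contra! hlt
      -- `f n + 1` representations would all appear at a finite stage
      obtain ⟨T, hT, hTc⟩ := exists_subset_encard_eq (Order.add_one_le_of_lt hlt)
      have htop : f n ≠ ⊤ := hlt.ne_top
      have hTfin : T.Finite := by
        rw [← encard_ne_top_iff, hTc]
        simp [htop]
      obtain ⟨k, hk⟩ := Reps_iUnion hmono hTfin hT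
      have h1 := (encard_le_encard hk).trans ((S k).2.le n)
      rw [hTc] at h1
      exact absurd h1 (not_le.2 ((ENat.lt_add_one_iff htop).2 le_rfl))
    · by_contra! hlt
      have hfin : (Reps (⋃ k, (S k).1) h n).Finite := encard_lt_top_iff.1 (hlt.trans_le le_top)
      -- all representations are present from stage `k` on, yet a later treatment of `n` adds one
      obtain ⟨k, hk⟩ := Reps_iUnion hmono hfin subset_rfl
      obtain ⟨l, hl, hln⟩ := hν n k
      have h1 := hrep (S l) l
      rw [hln] at h1
      have h2 := h1 ((encard_le_encard (Reps_mono (hle l) h n)).trans_lt hlt)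
      have h3 : (Reps (⋃ k, (S k).1) h n).encard ≤ (Reps (S l).1 h n).encard :=
        encard_le_encard (hk.trans (Reps_mono (hmono hl) h n))
      have h4 : (Reps (next (S l) l) h n).encard ≤ (Reps (⋃ k, (S k).1) h n).encard :=
        encard_le_encard (Reps_mono (hle (l + 1)) h n)
      have h5 := (add_le_add_left h3 1).trans (h2.trans h4)
      exact absurd h5 (not_le.2 ((ENat.lt_add_one_iff (encard_lt_top_iff.2 hfin).ne).2 le_rfl))
  · refine lt_of_lt_of_le zero_lt_one (le_limsup_of_frequently_le ?_)
    rw [frequently_atTop]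
    intro a
    obtain ⟨x, hx, hx1⟩ := hdense (S ⌈max a 1⌉₊) ⌈max a 1⌉₊
    have hx' := (Nat.le_ceil (max a 1)).trans hx
    have hx0 : 1 ≤ x := (le_max_right a 1).trans hx'
    refine ⟨x, (le_max_left a 1).trans hx', ?_⟩
    rw [ENNReal.one_le_ofReal]
    refine hx1.trans ?_
    have hω := hωpos x hx0
    gcongr
    exact countAbs_mono (hle (⌈max a 1⌉₊ + 1)) x
end

section
/- Let h ≥ 2 and let r be a positive integer with 2r > log₂ h. If b_1, …, b_h, b'_1, …, b'_h are positive integers such that T_γ^r(b_1) + ⋯ + T_γ^r(b_h) = T_γ^r(b'_1) + ⋯ + T_γ^r(b'_h), then b_1 + ⋯ + b_h = b'_1 + ⋯ + b'_h. -/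
/-!
Write `D_k(b)` for the part of `b` made of the binary digits with index in `[γ k, γ (k+1))`, so that
`b = ∑ D_k(b)` while `insZeros γ r b = ∑ 2^(2rk) D_k(b)`. Summing over the `h` numbers, the `k`-th
term `2^(2rk) ∑_i D_k(b_i)` is a multiple of the weight `w_k = 2^(2rk + γ k)` and, because
`h < 2^(2r)`, it is smaller than `w_(k+1)`: the inserted zeros leave room for all the carries. Hence
the sum of the transforms is a mixed-radix expansion with weights `w_k`, and such an expansion is
unique (`eq_of_sum_eq`). So the sum of the transforms determines every `∑_i D_k(b_i)`, and these add
up to `∑ b_i`.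
-/

open Filter Set

/-- The Inserting Zeros Transformation: if `b = Σ_i ε_i 2^i` in binary, then
`insZeros γ r b = Σ_{k≥0} 2^{2rk} Σ_{i=γ(k)}^{γ(k+1)-1} ε_i 2^i`.
(Since `γ` is strictly increasing with `γ 0 = 0`, all binary digits of `b`
have index `< γ (b+1)`, so the sum over `k ∈ [0, b]` captures all of them.) -/
def insZeros (γ : ℕ → ℕ) (r : ℕ) (b : ℕ) : ℕ :=
  ∑ k ∈ Finset.range (b + 1),
    2 ^ (2 * r * k) * ∑ i ∈ Finset.Ico (γ k) (γ (k + 1)), (b / 2 ^ i % 2) * 2 ^ i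

/-- The part of `b` formed by its binary digits with index in `[γ k, γ (k+1))`. -/
def digitBlock (γ : ℕ → ℕ) (b k : ℕ) : ℕ :=
  ∑ i ∈ Finset.Ico (γ k) (γ (k + 1)), (b / 2 ^ i % 2) * 2 ^ i

lemma sum_digits (b n : ℕ) : ∑ i ∈ Finset.range n, (b / 2 ^ i % 2) * 2 ^ i = b % 2 ^ n := by
  induction n with
  | zero => simp [Nat.mod_one]
  | succ n ih => rw [Finset.sum_range_succ, ih, Nat.mod_pow_succ, mul_comm]

lemma sum_digitBlock {γ : ℕ → ℕ} (hγ : StrictMono γ) (hγ0 : γ 0 = 0) (b n : ℕ) :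
    ∑ k ∈ Finset.range n, digitBlock γ b k = b % 2 ^ γ n := by
  rw [← sum_digits]
  induction n with
  | zero => simp [hγ0]
  | succ n ih =>
    rw [Finset.sum_range_succ, ih, digitBlock,
      Finset.sum_range_add_sum_Ico _ (hγ.monotone (Nat.le_succ n))]

lemma digitBlock_lt {γ : ℕ → ℕ} (hγ : StrictMono γ) (hγ0 : γ 0 = 0) (b k : ℕ) :
    digitBlock γ b k < 2 ^ γ (k + 1) := by
  have h1 := sum_digitBlock hγ hγ0 b (k + 1)
  rw [Finset.sum_range_succ] at h1
  have h2 : b % 2 ^ γ (k + 1) < 2 ^ γ (k + 1) := Nat.mod_lt _ (by positivity)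
  omega

lemma dvd_digitBlock (γ : ℕ → ℕ) (b k : ℕ) : 2 ^ γ k ∣ digitBlock γ b k :=
  Finset.dvd_sum fun _ hi =>
    Dvd.dvd.mul_left (pow_dvd_pow 2 (Finset.mem_Ico.1 hi).1) _

lemma digitBlock_eq_zero {γ : ℕ → ℕ} (hγ : StrictMono γ) {b k : ℕ} (hk : b < k) :
    digitBlock γ b k = 0 := by
  refine Finset.sum_eq_zero fun i hi => ?_
  have h1 : b < i := hk.trans_le ((hγ.le_apply).trans (Finset.mem_Ico.1 hi).1)
  rw [Nat.div_eq_of_lt (h1.trans Nat.lt_two_pow_self)]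
  simp

/-- The truncation point of the sum defining `insZeros` may be any `N > b`, so that several
numbers can share one. -/
lemma insZeros_eq {γ : ℕ → ℕ} (hγ : StrictMono γ) (r : ℕ) {b N : ℕ} (hN : b < N) :
    insZeros γ r b = ∑ k ∈ Finset.range N, 2 ^ (2 * r * k) * digitBlock γ b k := by
  refine Finset.sum_subset (Finset.range_mono hN) fun k _ hk => ?_
  have hbk : b < k := by
    rw [Finset.mem_range] at hk
    omega
  exact mul_eq_zero_of_right _ (digitBlock_eq_zero hγ hbk)

lemma sum_lt_weight {w f : ℕ → ℕ} (hw0 : 0 < w 0) (hw : ∀ k, w k ∣ w (k + 1))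
    (hf : ∀ k, w k ∣ f k) (hlt : ∀ k, f k < w (k + 1)) (n : ℕ) :
    ∑ k ∈ Finset.range n, f k < w n := by
  induction n with
  | zero => simpa using hw0
  | succ n ih =>
    rw [Finset.sum_range_succ]
    -- both sides of `f n < w (n + 1)` are multiples of `w n`, so they differ by at least `w n`
    have h1 : w n ≤ w (n + 1) - f n :=
      Nat.le_of_dvd (Nat.sub_pos_of_lt (hlt n)) (Nat.dvd_sub (hw n) (hf n))
    have := hlt n
    omega

/-- Uniqueness of mixed-radix expansions: if `w k ∣ w (k + 1)`, a sum of terms `f k` that are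
multiples of `w k` smaller than `w (k + 1)` determines the terms. -/
lemma eq_of_sum_eq {w f g : ℕ → ℕ} (hw0 : 0 < w 0) (hw : ∀ k, w k ∣ w (k + 1))
    (hf : ∀ k, w k ∣ f k) (hflt : ∀ k, f k < w (k + 1))
    (hg : ∀ k, w k ∣ g k) (hglt : ∀ k, g k < w (k + 1)) (n : ℕ)
    (heq : ∑ k ∈ Finset.range n, f k = ∑ k ∈ Finset.range n, g k) :
    ∀ k < n, f k = g k := by
  induction n with
  | zero => simp
  | succ n ih =>
    have h1 := sum_lt_weight hw0 hw hf hflt n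
    have h2 := sum_lt_weight hw0 hw hg hglt n
    rw [Finset.sum_range_succ, Finset.sum_range_succ] at heq
    -- reducing modulo `w n` isolates the sums of the lower terms
    have h3 : ∑ k ∈ Finset.range n, f k = ∑ k ∈ Finset.range n, g k := by
      obtain ⟨c, hc⟩ := hf n
      obtain ⟨d, hd⟩ := hg n
      have h4 := congrArg (· % w n) heq
      simpa [hc, hd, Nat.mod_eq_of_lt h1, Nat.mod_eq_of_lt h2] using h4
    intro k hk
    rcases Nat.lt_succ_iff_lt_or_eq.1 hk with hk | rfl
    · exact ih h3 k hk
    · omega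

theorem stmt_6 (γ : ℕ → ℕ) (hγ : StrictMono γ) (hγ0 : γ 0 = 0)
    (h r : ℕ) (hh : 2 ≤ h) (hr : 0 < r) (hlog : Real.logb 2 h < 2 * r)
    (b b' : Fin h → ℕ) (hb : ∀ i, 0 < b i) (hb' : ∀ i, 0 < b' i)
    (heq : ∑ i, insZeros γ r (b i) = ∑ i, insZeros γ r (b' i)) :
    ∑ i, b i = ∑ i, b' i := by
  have hlt : h < 2 ^ (2 * r) := by
    rw [Real.logb_lt_iff_lt_rpow (by norm_num) (by positivity)] at hlog
    exact_mod_cast hlog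
  obtain ⟨N, hN, hN'⟩ : ∃ N, (∀ i, b i < N) ∧ ∀ i, b' i < N := by
    refine ⟨∑ i, b i + ∑ i, b' i + 1, fun i => ?_, fun i => ?_⟩
    · have := Finset.single_le_sum (f := b) (fun _ _ => Nat.zero_le _) (Finset.mem_univ i)
      omega
    · have := Finset.single_le_sum (f := b') (fun _ _ => Nat.zero_le _) (Finset.mem_univ i)
      omega
  have hins : ∀ c : Fin h → ℕ, (∀ i, c i < N) → ∑ i, insZeros γ r (c i) =
      ∑ k ∈ Finset.range N, 2 ^ (2 * r * k) * ∑ i, digitBlock γ (c i) k := by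
    intro c hc
    simp only [fun i => insZeros_eq hγ r (hc i), Finset.mul_sum]
    exact Finset.sum_comm
  have hsum : ∀ c : Fin h → ℕ, (∀ i, c i < N) → ∑ i, c i =
      ∑ k ∈ Finset.range N, ∑ i, digitBlock γ (c i) k := by
    intro c hc
    rw [Finset.sum_comm]
    refine Finset.sum_congr rfl fun i _ => ?_
    rw [sum_digitBlock hγ hγ0, Nat.mod_eq_of_lt]
    exact ((hc i).trans_le hγ.le_apply).trans Nat.lt_two_pow_self
  have hdvd : ∀ (c : Fin h → ℕ) (k : ℕ),
      2 ^ (2 * r * k + γ k) ∣ 2 ^ (2 * r * k) * ∑ i, digitBlock γ (c i) k := by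
    intro c k
    rw [pow_add]
    exact mul_dvd_mul_left _ (Finset.dvd_sum fun i _ => dvd_digitBlock γ _ k)
  have hbound : ∀ (c : Fin h → ℕ) (k : ℕ),
      2 ^ (2 * r * k) * ∑ i, digitBlock γ (c i) k < 2 ^ (2 * r * (k + 1) + γ (k + 1)) := by
    intro c k
    have h1 : ∑ i, digitBlock γ (c i) k ≤ h * 2 ^ γ (k + 1) := by
      simpa using Finset.sum_le_card_nsmul Finset.univ (fun i => digitBlock γ (c i) k) _
        fun i _ => (digitBlock_lt hγ hγ0 (c i) k).le
    calc 2 ^ (2 * r * k) * ∑ i, digitBlock γ (c i) k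
        ≤ 2 ^ (2 * r * k) * (h * 2 ^ γ (k + 1)) := by gcongr
      _ < 2 ^ (2 * r * k) * (2 ^ (2 * r) * 2 ^ γ (k + 1)) := by gcongr
      _ = 2 ^ (2 * r * (k + 1) + γ (k + 1)) := by ring
  rw [hins b hN, hins b' hN'] at heq
  have hterm := eq_of_sum_eq (w := fun k => 2 ^ (2 * r * k + γ k)) (by positivity)
    (fun k => pow_dvd_pow 2 (add_le_add (Nat.mul_le_mul_left _ (Nat.le_succ k))
      (hγ.monotone (Nat.le_succ k))))
    (hdvd b) (hbound b) (hdvd b') (hbound b') N heq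
  rw [hsum b hN, hsum b' hN']
  exact Finset.sum_congr rfl fun k hk =>
    Nat.eq_of_mul_eq_mul_left (by positivity) (hterm k (Finset.mem_range.1 hk))
end

section
/- For every integer k ≥ 1 and every positive integer b, ‖T_γ^r(b)‖_{m_k} < m_k / 2^{2r}, where m_k = 2^{2rk + γ(k)}. -/
/-!
Modulo `m = 2 ^ (2 r k + γ k)` every block of index `j ≥ k` in `insZeros γ r b` vanishes, since
it is `2 ^ (2 r j)` times a sum of multiples of `2 ^ (γ k)`. The blocks of index `j < k` add up to
less than `2 ^ (2 r (k - 1) + γ k) = m / 2 ^ (2 r)`, because the highest of them carries only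
`2 r (k - 1)` inserted zeros and its digits have index below `γ k`. So the least nonnegative
residue is already small enough.
-/

open Filter Set

/-- `normMod m x = min { |y| : x ≡ y (mod m) }`, for `m ≥ 2`.  Here `x % m` is the
least nonnegative residue, so the minimum is `min (x % m) (m - x % m)`. -/
def normMod (m x : ℤ) : ℤ := min (x % m) (m - x % m)

/-- A string of binary digits in positions `a ≤ i < c` has value at most `2 ^ c - 2 ^ a`. -/
lemma digit_block_le (b a c : ℕ) (h : a ≤ c) :
    (∑ i ∈ Finset.Ico a c, (b / 2 ^ i % 2) * 2 ^ i) + 2 ^ a ≤ 2 ^ c := by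
  induction c, h using Nat.le_induction with
  | base => simp
  | succ c hac ih =>
    rw [Finset.sum_Ico_succ_top hac, pow_succ]
    have h1 : b / 2 ^ c % 2 * 2 ^ c ≤ 1 * 2 ^ c := Nat.mul_le_mul_right _ (by omega)
    omega

/-- The blocks of index at most `n` stay below the position `2 r n + γ (n + 1)`, one past the
highest digit that block `n` can contain. -/
lemma sum_blocks_lt (γ : ℕ → ℕ) (hγ : StrictMono γ) (r b n : ℕ) :
    ∑ k ∈ Finset.range (n + 1),
      2 ^ (2 * r * k) * ∑ i ∈ Finset.Ico (γ k) (γ (k + 1)), (b / 2 ^ i % 2) * 2 ^ i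
      < 2 ^ (2 * r * n + γ (n + 1)) := by
  induction n with
  | zero =>
    have h := digit_block_le b (γ 0) (γ 1) (hγ.monotone zero_le_one)
    have h0 : 0 < 2 ^ γ 0 := by positivity
    simp only [zero_add, Finset.sum_range_one, mul_zero, pow_zero, one_mul]
    omega
  | succ n ih =>
    rw [Finset.sum_range_succ]
    have h := Nat.mul_le_mul_left (2 ^ (2 * r * (n + 1)))
      (digit_block_le b (γ (n + 1)) (γ (n + 1 + 1)) (hγ.monotone (Nat.le_succ _)))
    rw [mul_add, ← pow_add, ← pow_add] at h
    have h2 : 2 ^ (2 * r * n + γ (n + 1)) ≤ 2 ^ (2 * r * (n + 1) + γ (n + 1)) :=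
      Nat.pow_le_pow_right (by norm_num)
        (Nat.add_le_add_right (Nat.mul_le_mul_left _ (Nat.le_succ _)) _)
    omega

lemma dvd_block (γ : ℕ → ℕ) (hγ : StrictMono γ) (r b k j : ℕ) (h : k ≤ j) :
    2 ^ (2 * r * k + γ k) ∣
      2 ^ (2 * r * j) * ∑ i ∈ Finset.Ico (γ j) (γ (j + 1)), (b / 2 ^ i % 2) * 2 ^ i := by
  rw [pow_add]
  refine mul_dvd_mul (pow_dvd_pow _ (Nat.mul_le_mul_left _ h)) (Finset.dvd_sum fun i hi => ?_)
  exact (pow_dvd_pow 2 ((hγ.monotone h).trans (Finset.mem_Ico.1 hi).1)).mul_left _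

lemma insZeros_mod_le (γ : ℕ → ℕ) (hγ : StrictMono γ) (r b k : ℕ) :
    insZeros γ r b % 2 ^ (2 * r * k + γ k) ≤
      ∑ j ∈ Finset.range k,
        2 ^ (2 * r * j) * ∑ i ∈ Finset.Ico (γ j) (γ (j + 1)), (b / 2 ^ i % 2) * 2 ^ i := by
  unfold insZeros
  rcases le_total (b + 1) k with h | h
  · exact (Nat.mod_le _ _).trans (Finset.sum_le_sum_of_subset (Finset.range_mono h))
  · rw [← Finset.sum_range_add_sum_Ico _ h, Nat.add_mod,
      Nat.mod_eq_zero_of_dvd (Finset.dvd_sum fun j hj =>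
        dvd_block γ hγ r b k j (Finset.mem_Ico.1 hj).1), add_zero, Nat.mod_mod]
    exact Nat.mod_le _ _

/-- For `k ≥ 1` and `b ≥ 1`, `‖T_γ^r(b)‖_{m_k} < m_k / 2^{2r}` where
`m_k = 2^{2rk + γ(k)}` (the division is exact since `2rk + γ(k) ≥ 2r`). -/
theorem stmt_9 (γ : ℕ → ℕ) (hγ : StrictMono γ) (hγ0 : γ 0 = 0) (r : ℕ) (hr : 0 < r)
    (k : ℕ) (hk : 1 ≤ k) (b : ℕ) (hb : 0 < b) :
    normMod ((2 : ℤ) ^ (2 * r * k + γ k)) (insZeros γ r b : ℤ) <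
      (2 : ℤ) ^ (2 * r * k + γ k) / (2 : ℤ) ^ (2 * r) := by
  obtain ⟨n, rfl⟩ : ∃ n, k = n + 1 := ⟨k - 1, by omega⟩
  have h := (insZeros_mod_le γ hγ r b (n + 1)).trans_lt (sum_blocks_lt γ hγ r b n)
  have hq : (2 : ℤ) ^ (2 * r * (n + 1) + γ (n + 1)) / 2 ^ (2 * r)
      = 2 ^ (2 * r * n + γ (n + 1)) := by
    rw [show 2 * r * (n + 1) + γ (n + 1) = (2 * r * n + γ (n + 1)) + 2 * r by ring, pow_add]
    exact Int.mul_ediv_cancel _ (by positivity)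
  rw [hq]
  exact (min_le_left _ _).trans_lt (by exact_mod_cast h)
end

section
/- In the recursive construction, fix k ≥ 1 and for nonnegative integers s, t with s + t ≤ h define A_k^{(s,t)} = (h−s−t)A_{k−1} + s·u_{2k−1} + t·u_{2k}, where (h−s−t)A_{k−1} denotes the (h−s−t)-fold sumset of A_{k−1} (and is {0} when s + t = h). Then the sets A_k^{(s,t)}, for 0 ≤ s, t and s + t ≤ h, are pairwise disjoint, except possibly the two sets A_k^{(0,0)} and A_k^{(h−1,1)}. -/
/-!
Work modulo `M = m_k`, and put `D = m_k 2^{-2r}`, so that `m_k 2^{-r} = 2^r D`.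

* Every element of `A_{k-1}` lies within `D` of a multiple of `M` (`Aseq_near`). For elements of
  `T_γ^r(B)` this is because the `2r` binary digits just below position `2rk + γ(k)` are inserted
  zeros (`insZeros_near`); the earlier `u_i` are themselves at most `D` in absolute value
  (`u1_abs_le`, `u2_abs_le`).
* Hence an element of `A_k^{(s,t)}` equals `(t(h-1) - s) 2^r D + t z_k` up to an error of at most
  `h D`, modulo `M`. For an element common to two of the sets, the total error is at most
  `3 h D < 2^r D`, so it vanishes, and `t(h-1) - s ≡ t'(h-1) - s'` modulo `2^r`. Both sides lie in
  `[-h, h(h-1)]` and `h² < 2^r`, so they are equal.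
* The equation `(t - t')(h-1) = s - s'` with `s + t, s' + t' ≤ h` only has the solutions
  `(s,t) = (s',t')` and the exceptional pair.
-/

open Filter Set Pointwise

/-- `repFnN B h n`: the representation function of order `h` for a set of naturals. -/
noncomputable def repFnN (B : Set ℕ) (h : ℕ) (n : ℕ) : ℕ∞ :=
  {a : Fin h → ℕ | Monotone a ∧ (∀ i, a i ∈ B) ∧ ∑ i, a i = n}.encard

/-- `zseq j = j - ⌊√j⌋(⌊√j⌋ + 1)`. -/
def zseq (j : ℕ) : ℤ := (j : ℤ) - (Nat.sqrt j : ℤ) * ((Nat.sqrt j : ℤ) + 1)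

/-- `m_k = 2^{2rk + γ(k)}`. -/
def mval (γ : ℕ → ℕ) (r k : ℕ) : ℤ := 2 ^ (2 * r * k + γ k)

/-- `u_{2k-1} = -m_k·2^{-r}` (the division is exact for `k ≥ 1`). -/
def u1 (γ : ℕ → ℕ) (r k : ℕ) : ℤ := -(mval γ r k / 2 ^ r)

/-- `u_{2k} = (h-1)·m_k·2^{-r} + z_k` (the division is exact for `k ≥ 1`). -/
def u2 (γ : ℕ → ℕ) (r h k : ℕ) : ℤ := ((h : ℤ) - 1) * (mval γ r k / 2 ^ r) + zseq k

open Classical in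
/-- The recursive construction: `A_0 = {a ∈ T_γ^r(B) : a ≥ n_0}` and, for `k ≥ 1`,
`A_k = A_{k-1} ∪ {u_{2k-1}, u_{2k}}` if `r_{A_{k-1},h}(z_k) < f(z_k)`, else `A_k = A_{k-1}`. -/
noncomputable def Aseq (γ : ℕ → ℕ) (r h n0 : ℕ) (f : ℤ → ℕ∞) (B : Set ℕ) : ℕ → Set ℤ
  | 0 => {a : ℤ | (∃ b ∈ B, (insZeros γ r b : ℤ) = a) ∧ (n0 : ℤ) ≤ a}
  | k + 1 =>
    if repFn (Aseq γ r h n0 f B k) h (zseq (k + 1)) < f (zseq (k + 1)) then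
      Aseq γ r h n0 f B k ∪ {u1 γ r (k + 1), u2 γ r h (k + 1)}
    else Aseq γ r h n0 f B k

/-- The `m`-fold sumset of `A` (equal to `{0}` when `m = 0`). -/
def nSumset (A : Set ℤ) : ℕ → Set ℤ
  | 0 => {0}
  | m + 1 => A + nSumset A m

/-- `A_k^{(s,t)} = (h-s-t)·A_{k-1} + s·u_{2k-1} + t·u_{2k}`. -/
noncomputable def Ast (γ : ℕ → ℕ) (r h n0 : ℕ) (f : ℤ → ℕ∞) (B : Set ℕ)
    (k s t : ℕ) : Set ℤ :=
  (fun x => x + (s : ℤ) * u1 γ r k + (t : ℤ) * u2 γ r h k) ''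
    nSumset (Aseq γ r h n0 f B (k - 1)) (h - s - t)

lemma bits_block_le (d : ℕ → ℕ) (hd : ∀ i, d i ≤ 1) {a b : ℕ} (hab : a ≤ b) :
    ∑ i ∈ Finset.Ico a b, d i * 2 ^ i + 2 ^ a ≤ 2 ^ b := by
  induction b, hab using Nat.le_induction with
  | base => simp
  | succ n hn ih =>
    rw [Finset.sum_Ico_succ_top hn, pow_succ]
    have := Nat.mul_le_mul_right (2 ^ n) (hd n)
    omega

/-- The blocks of index below `n ≤ K + 1` are shifted by at most `2rK` and the binary digits in them
have index below `γ n`, so together they contribute less than `2^{2rK + γ n}`. -/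
lemma low_blocks_lt {γ : ℕ → ℕ} (hγ : StrictMono γ) (r b K n : ℕ) (hn : n ≤ K + 1) :
    ∑ k ∈ Finset.range n,
      2 ^ (2 * r * k) * ∑ i ∈ Finset.Ico (γ k) (γ (k + 1)), (b / 2 ^ i % 2) * 2 ^ i
      < 2 ^ (2 * r * K) * 2 ^ (γ n) := by
  induction n with
  | zero => simp
  | succ n ih =>
    rw [Finset.sum_range_succ]
    have h1 := ih (by omega)
    have h2 := bits_block_le (fun i => b / 2 ^ i % 2) (fun i => by omega)
      (hγ.monotone (Nat.le_succ n))
    have h3 : 2 ^ (2 * r * n) ≤ 2 ^ (2 * r * K) :=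
      Nat.pow_le_pow_right (by norm_num) (Nat.mul_le_mul_left _ (by omega))
    have h4 := Nat.mul_le_mul_left (2 ^ (2 * r * K)) h2
    have h5 := Nat.mul_le_mul_right
      (∑ i ∈ Finset.Ico (γ n) (γ (n + 1)), (b / 2 ^ i % 2) * 2 ^ i) h3
    rw [mul_add] at h4
    simp only [Nat.succ_eq_add_one] at h4
    omega

/-- Modulo `m_{K+1}`, the number `T_γ^r(b)` is the contribution of its blocks `0, …, K`, which is
at most `m_{K+1} 2^{-2r}`: the blocks from `K + 1` on are multiples of `m_{K+1}`. -/
lemma insZeros_near {γ : ℕ → ℕ} (hγ : StrictMono γ) (r b K : ℕ) :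
    ∃ q : ℤ, |(insZeros γ r b : ℤ) - mval γ r (K + 1) * q| ≤ 2 ^ (2 * r * K + γ (K + 1)) := by
  have key : ∀ n, ∃ e q : ℕ, (∑ k ∈ Finset.range n,
      2 ^ (2 * r * k) * ∑ i ∈ Finset.Ico (γ k) (γ (k + 1)), (b / 2 ^ i % 2) * 2 ^ i)
        = e + 2 ^ (2 * r * (K + 1) + γ (K + 1)) * q ∧ e ≤ 2 ^ (2 * r * K + γ (K + 1)) := by
    intro n
    induction n with
    | zero => exact ⟨0, 0, by simp, by simp⟩
    | succ n ih =>
      by_cases hn : n + 1 ≤ K + 1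
      · refine ⟨_, 0, (by rw [mul_zero, add_zero]), ?_⟩
        refine (low_blocks_lt hγ r b K (n + 1) hn).le.trans ?_
        rw [pow_add]
        exact Nat.mul_le_mul_left _ (Nat.pow_le_pow_right (by norm_num) (hγ.monotone hn))
      · obtain ⟨e, q, h1, h2⟩ := ih
        have hn' : K + 1 ≤ n := by omega
        have hd : 2 ^ (2 * r * (K + 1) + γ (K + 1)) ∣
            2 ^ (2 * r * n) * ∑ i ∈ Finset.Ico (γ n) (γ (n + 1)), (b / 2 ^ i % 2) * 2 ^ i := by
          rw [pow_add]
          refine mul_dvd_mul (pow_dvd_pow _ (Nat.mul_le_mul_left _ hn')) ?_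
          refine Finset.dvd_sum fun i hi => ?_
          refine Dvd.dvd.mul_left (pow_dvd_pow _ ?_) _
          exact (hγ.monotone hn').trans (Finset.mem_Ico.1 hi).1
        obtain ⟨c, hc⟩ := hd
        exact ⟨e, q + c, by rw [Finset.sum_range_succ, h1, hc]; ring, h2⟩
  obtain ⟨e, q, h1, h2⟩ := key (b + 1)
  refine ⟨q, ?_⟩
  have h3 : (insZeros γ r b : ℤ) - mval γ r (K + 1) * q = e := by
    have : insZeros γ r b = e + 2 ^ (2 * r * (K + 1) + γ (K + 1)) * q := h1
    rw [this, mval]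
    push_cast
    ring
  rw [h3, abs_of_nonneg (by positivity)]
  exact_mod_cast h2

lemma mval_succ (γ : ℕ → ℕ) (r K : ℕ) :
    mval γ r (K + 1) = 2 ^ r * (2 ^ r * 2 ^ (2 * r * K + γ (K + 1))) := by
  rw [mval, ← pow_add, ← pow_add]
  congr 1
  ring

lemma mval_div (γ : ℕ → ℕ) (r K : ℕ) :
    mval γ r (K + 1) / 2 ^ r = 2 ^ r * 2 ^ (2 * r * K + γ (K + 1)) := by
  rw [mval_succ, Int.mul_ediv_cancel_left _ (by positivity)]

lemma zseq_abs_le (j : ℕ) : |zseq j| ≤ j := by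
  unfold zseq
  have h1 : (Nat.sqrt j : ℤ) * Nat.sqrt j ≤ j := by exact_mod_cast Nat.sqrt_le j
  have h2 : (Nat.sqrt j : ℤ) ≤ j := by exact_mod_cast Nat.sqrt_le_self j
  have h3 : (0 : ℤ) ≤ Nat.sqrt j := by positivity
  rw [abs_le]
  constructor <;> nlinarith

/-- Consecutive scales: `m_{j+1} 2^{-r}`, multiplied by `2^r`, is at most half of
`m_{K+1} 2^{-2r}` when `j < K`. -/
lemma scale_le {γ : ℕ → ℕ} (hγ : StrictMono γ) (r : ℕ) {j K : ℕ} (hj : j < K) :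
    2 * (2 ^ r * (mval γ r (j + 1) / 2 ^ r)) ≤ 2 ^ (2 * r * K + γ (K + 1)) := by
  have h1 : 2 * r * (j + 1) ≤ 2 * r * K := Nat.mul_le_mul_left _ hj
  have h2 : γ (j + 1) < γ (K + 1) := hγ (by omega)
  have h3 : 2 * (2 ^ r * (mval γ r (j + 1) / 2 ^ r)) = 2 ^ (2 * r * (j + 1) + γ (j + 1) + 1) := by
    rw [mval_div, pow_succ, ← mval, mval_succ]
    ring
  rw [h3]
  exact pow_le_pow_right₀ (by norm_num) (by omega)

lemma two_mul_le_scale {γ : ℕ → ℕ} (hγ : StrictMono γ) (r K : ℕ) :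
    2 * ((K : ℤ) + 1) ≤ 2 ^ (2 * r * K + γ (K + 1)) := by
  have h1 : K + 1 ≤ γ (K + 1) := hγ.id_le _
  have h2 : K < 2 ^ K := Nat.lt_two_pow_self
  have h3 : (2 : ℤ) ^ (K + 1) ≤ 2 ^ (2 * r * K + γ (K + 1)) :=
    pow_le_pow_right₀ (by norm_num) (by omega)
  have h4 : (K : ℤ) + 1 ≤ 2 ^ K := by exact_mod_cast h2
  rw [pow_succ] at h3
  linarith

lemma u1_abs_le {γ : ℕ → ℕ} (hγ : StrictMono γ) (r : ℕ) {j K : ℕ} (hj : j < K) :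
    |u1 γ r (j + 1)| ≤ 2 ^ (2 * r * K + γ (K + 1)) := by
  have h1 := scale_le hγ r hj
  have h2 : (1 : ℤ) ≤ 2 ^ r := one_le_pow₀ (by norm_num)
  have h3 : 0 ≤ mval γ r (j + 1) / 2 ^ r := by rw [mval_div]; positivity
  rw [u1, abs_neg, abs_of_nonneg h3]
  nlinarith

lemma u2_abs_le {γ : ℕ → ℕ} (hγ : StrictMono γ) {r h : ℕ} (hh : 1 ≤ h) (hr : (h : ℤ) ≤ 2 ^ r)
    {j K : ℕ} (hj : j < K) :
    |u2 γ r h (j + 1)| ≤ 2 ^ (2 * r * K + γ (K + 1)) := by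
  have h1 := scale_le hγ r hj
  have h3 : 0 ≤ mval γ r (j + 1) / 2 ^ r := by rw [mval_div]; positivity
  have h4 := two_mul_le_scale hγ r K
  have h5 := zseq_abs_le (j + 1)
  have h6 : ((j + 1 : ℕ) : ℤ) ≤ K := by exact_mod_cast hj
  have hh' : (1 : ℤ) ≤ h := by exact_mod_cast hh
  rw [u2]
  refine (abs_add_le _ _).trans ?_
  rw [abs_of_nonneg (mul_nonneg (by linarith) h3)]
  nlinarith

/-- Elements of `A_j`, for `j ≤ K`, are within `m_{K+1} 2^{-2r}` of a multiple of `m_{K+1}`. -/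
lemma Aseq_near {γ : ℕ → ℕ} (hγ : StrictMono γ) {r h : ℕ} (hh : 1 ≤ h) (hr : (h : ℤ) ≤ 2 ^ r)
    (n0 : ℕ) (f : ℤ → ℕ∞) (B : Set ℕ) (K : ℕ) {j : ℕ} (hj : j ≤ K) :
    ∀ a ∈ Aseq γ r h n0 f B j,
      ∃ q : ℤ, |a - mval γ r (K + 1) * q| ≤ 2 ^ (2 * r * K + γ (K + 1)) := by
  induction j with
  | zero =>
    rintro a ⟨⟨b, -, rfl⟩, -⟩
    exact insZeros_near hγ r b K
  | succ j ih =>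
    intro a ha
    rw [Aseq] at ha
    split_ifs at ha
    · rcases ha with ha | rfl | rfl
      · exact ih (by omega) a ha
      · exact ⟨0, by simpa using u1_abs_le hγ r (K := K) (by omega)⟩
      · exact ⟨0, by simpa using u2_abs_le hγ hh hr (K := K) (by omega)⟩
    · exact ih (by omega) a ha

lemma nSumset_near {A : Set ℤ} {M D : ℤ} (hA : ∀ a ∈ A, ∃ q : ℤ, |a - M * q| ≤ D) (n : ℕ) :
    ∀ x ∈ nSumset A n, ∃ q : ℤ, |x - M * q| ≤ n * D := by
  induction n with
  | zero =>
    intro x hx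
    have hx : x = 0 := hx
    exact ⟨0, by simp [hx]⟩
  | succ n ih =>
    rintro x ⟨a, ha, y, hy, rfl⟩
    obtain ⟨q, hq⟩ := hA a ha
    obtain ⟨p, hp⟩ := ih y hy
    refine ⟨q + p, ?_⟩
    have : a + y - M * (q + p) = (a - M * q) + (y - M * p) := by ring
    simp only [this]
    refine (abs_add_le _ _).trans ?_
    push_cast
    linarith

/-- A multiple of `R` of absolute value less than `R` vanishes; applied twice, first at scale
`R * D` and then at scale `R`. -/
lemma coeff_eq_zero {R D c e q : ℤ} (hD : 0 < D) (he : |e| < R * D) (hc : |c| < R)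
    (heq : c * (R * D) + e = R * (R * D) * q) : c = 0 := by
  have he0 : e = 0 := Int.eq_zero_of_abs_lt_dvd ⟨R * q - c, by linear_combination heq⟩ he
  subst he0
  have hR : 0 < R := lt_of_le_of_lt (abs_nonneg c) hc
  refine Int.eq_zero_of_abs_lt_dvd ⟨q, ?_⟩ hc
  apply mul_right_cancel₀ (mul_pos hR hD).ne'
  linear_combination heq

/-- The only coincidences among the coefficients `t(h-1) - s`, with `t' < t`. -/
lemma exceptional_pair {h s t s' t' : ℕ} (hh : 2 ≤ h) (hst : s + t ≤ h)
    (heq : (t : ℤ) * (h - 1) - s = t' * (h - 1) - s') (hlt : t' < t) :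
    (s', t') = (0, 0) ∧ (s, t) = (h - 1, 1) := by
  obtain ⟨d, rfl⟩ := Nat.exists_eq_add_of_lt hlt
  obtain ⟨m, rfl⟩ := Nat.exists_eq_add_of_le hh
  have h1 : s = s' + (d + 1) * (m + 1) := by
    zify
    push_cast at heq
    linear_combination -heq
  subst h1
  have hd : d = 0 := by
    rcases Nat.eq_zero_or_pos d with h | h
    · exact h
    · nlinarith
  subst hd
  simp only [Prod.mk.injEq]
  omega

lemma two_mul_lt_two_pow {h n0 r : ℕ} (hh : 2 ≤ h)
    (hr : 1 + Real.logb 2 ((h : ℝ) ^ 2 + (n0 : ℝ)) < (r : ℝ)) :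
    2 * ((h : ℤ) ^ 2 + n0) < 2 ^ r := by
  have hpos : (0 : ℝ) < (h : ℝ) ^ 2 + n0 := by positivity
  have h1 : Real.logb 2 (2 * ((h : ℝ) ^ 2 + n0)) < r := by
    rw [Real.logb_mul (by norm_num) hpos.ne', Real.logb_self_eq_one (by norm_num)]
    exact hr
  rw [Real.logb_lt_iff_lt_rpow (by norm_num) (by positivity), Real.rpow_natCast] at h1
  exact_mod_cast h1

/-- The sets `A_k^{(s,t)}`, `s + t ≤ h`, are pairwise disjoint, except possibly
the pair `A_k^{(0,0)}`, `A_k^{(h-1,1)}`. -/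
theorem stmt_11 (h g n0 r : ℕ) (hh : 2 ≤ h) (hg : 1 ≤ g) (hn0 : 1 ≤ n0)
    (f : ℤ → ℕ∞) (hf : ∀ n : ℤ, (n0 : ℤ) ≤ |n| → (g : ℕ∞) ≤ f n)
    (hr : 1 + Real.logb 2 ((h : ℝ) ^ 2 + (n0 : ℝ)) < (r : ℝ))
    (γ : ℕ → ℕ) (hγ : StrictMono γ) (hγ0 : γ 0 = 0)
    (B : Set ℕ) (hBpos : ∀ b ∈ B, 0 < b) (hB : ∀ n : ℕ, repFnN B h n ≤ g)
    (k : ℕ) (hk : 1 ≤ k)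
    (s t s' t' : ℕ) (hst : s + t ≤ h) (hst' : s' + t' ≤ h)
    (hne : (s, t) ≠ (s', t'))
    (hexc : ¬(((s, t) = (0, 0) ∧ (s', t') = (h - 1, 1)) ∨
              ((s', t') = (0, 0) ∧ (s, t) = (h - 1, 1)))) :
    Disjoint (Ast γ r h n0 f B k s t) (Ast γ r h n0 f B k s' t') := by
  obtain ⟨K, rfl⟩ := Nat.exists_eq_add_of_le' hk
  have hR := two_mul_lt_two_pow hh hr
  have hh' : (2 : ℤ) ≤ h := by exact_mod_cast hh
  have hn0' : (1 : ℤ) ≤ n0 := by exact_mod_cast hn0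
  have hhR : (h : ℤ) ≤ 2 ^ r := by nlinarith
  have hnear := Aseq_near hγ (by omega) hhR n0 f B K le_rfl
  have hz : |zseq (K + 1)| ≤ 2 ^ (2 * r * K + γ (K + 1)) := by
    have h1 := zseq_abs_le (K + 1)
    have h2 := two_mul_le_scale hγ r K
    push_cast at h1
    linarith
  rw [Set.disjoint_left]
  rintro _ ⟨x, hx, rfl⟩ ⟨y, hy, hxy⟩
  simp only [Nat.add_sub_cancel] at hx hy
  obtain ⟨q, hq⟩ := nSumset_near hnear _ x hx
  obtain ⟨p, hp⟩ := nSumset_near hnear _ y hy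
  simp only [u1, u2, mval_div] at hxy
  rw [mval_succ] at hq hp
  have hD : (0 : ℤ) < 2 ^ (2 * r * K + γ (K + 1)) := by positivity
  -- From here on `D = m_{K+1} 2^{-2r}` and `R = 2^r`, so that `m_{K+1} = R * (R * D)`.
  generalize (2 : ℤ) ^ (2 * r * K + γ (K + 1)) = D at *
  generalize (2 : ℤ) ^ r = R at *
  generalize zseq (K + 1) = z at *
  have b1 : (((h - s - t : ℕ) : ℤ)) ≤ h := by exact_mod_cast (by omega : h - s - t ≤ h)
  have b2 : (((h - s' - t' : ℕ) : ℤ)) ≤ h := by exact_mod_cast (by omega : h - s' - t' ≤ h)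
  have e1 : |x - R * (R * D) * q| ≤ h * D := hq.trans (mul_le_mul_of_nonneg_right b1 hD.le)
  have e2 : |y - R * (R * D) * p| ≤ h * D := hp.trans (mul_le_mul_of_nonneg_right b2 hD.le)
  have e3 : |((t : ℤ) - t') * z| ≤ h * D := by
    rw [abs_mul]
    refine mul_le_mul ?_ hz (abs_nonneg _) (by positivity)
    rw [abs_le]
    constructor <;> omega
  -- The error terms sum to at most `3 h D < R D`, and the difference of the coefficients is at most
  -- `h² < R` in absolute value.
  have heq : (t : ℤ) * (h - 1) - s = t' * (h - 1) - s' := by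
    refine sub_eq_zero.1 (coeff_eq_zero (R := R) (D := D)
      (e := (x - R * (R * D) * q) - (y - R * (R * D) * p) + ((t : ℤ) - t') * z)
      (q := p - q) hD ?_ ?_ ?_)
    · have h3 : 3 * (h : ℤ) < R := by nlinarith
      have h4 := mul_lt_mul_of_pos_right h3 hD
      rw [abs_le] at e1 e2 e3
      rw [abs_lt]
      constructor <;> linarith
    · have c1 : (s : ℤ) + t ≤ h := by exact_mod_cast hst
      have c2 : (s' : ℤ) + t' ≤ h := by exact_mod_cast hst'
      have c3 : (0 : ℤ) ≤ s := by positivity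
      have c4 : (0 : ℤ) ≤ t := by positivity
      have c5 : (0 : ℤ) ≤ s' := by positivity
      have c6 : (0 : ℤ) ≤ t' := by positivity
      rw [abs_lt]
      constructor <;> nlinarith
    · linear_combination -hxy
  rcases lt_trichotomy t t' with hlt | rfl | hlt
  · exact hexc (Or.inl (exceptional_pair hh hst' heq.symm hlt))
  · apply hne
    have : s = s' := by omega
    rw [this]
  · exact hexc (Or.inr (exceptional_pair hh hst heq hlt))
end
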